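/- arXiv:1403.5673 — 4 statements merged into one kernel-verified Lean document; each statement's English description precedes it below -/
import Mathlib

section
/- Let F be a field of characteristic 0 and let n, m ≥ 1. Let T_{n,m} be the commutative F-subalgebra of the polynomial ring A generated by all coefficients of the characteristic polynomials of all elements of the generic matrix algebra R_{n,m}. Then T_{n,m} is a finitely generated commutative F-algebra, and the subalgebra R_{n,m}·T_{n,m} of M_n(A) is a finitely generated module over T_{n,m}; in particular both T_{n,m} and R_{n,m}·T_{n,m} are Noetherian. -/
/-- The `l`-th generic `n × n` matrix: the matrix whose `(i,j)` entry is the polynomial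
variable `x^{(l)}_{ij}` of `A = F[x^{(l)}_{ij}]`. -/
noncomputable def genericMatrix (F : Type) [Field F] (n m : ℕ) (l : Fin m) :
    Matrix (Fin n) (Fin n) (MvPolynomial (Fin m × Fin n × Fin n) F) :=
  Matrix.of fun i j => MvPolynomial.X (l, i, j)

/-- The algebra `R_{n,m}` of `m` generic `n × n` matrices. -/
noncomputable def genericMatrixAlgebra (F : Type) [Field F] (n m : ℕ) :
    Subalgebra F (Matrix (Fin n) (Fin n) (MvPolynomial (Fin m × Fin n × Fin n) F)) :=
  Algebra.adjoin F (Set.range (genericMatrix F n m))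

/-- `T_{n,m}`: the commutative `F`-subalgebra of `A` generated by all coefficients of
characteristic polynomials of elements of `R_{n,m}`. -/
noncomputable def genericTraceRing (F : Type) [Field F] (n m : ℕ) :
    Subalgebra F (MvPolynomial (Fin m × Fin n × Fin n) F) :=
  Algebra.adjoin F
    {a | ∃ u ∈ genericMatrixAlgebra F n m, ∃ i : ℕ, a = (Matrix.charpoly u).coeff i}

/-- `R_{n,m}·T_{n,m}`: the `F`-subalgebra of `Mₙ(A)` generated by `R_{n,m}` together with
the scalar matrices coming from `T_{n,m}` (equivalently, spanned by products of elements of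
`R_{n,m}` and `T_{n,m}`). -/
noncomputable def genericTraceMatrixAlgebra (F : Type) [Field F] (n m : ℕ) :
    Subalgebra F (Matrix (Fin n) (Fin n) (MvPolynomial (Fin m × Fin n × Fin n) F)) :=
  Algebra.adjoin F
    ((genericMatrixAlgebra F n m : Set (Matrix (Fin n) (Fin n)
        (MvPolynomial (Fin m × Fin n × Fin n) F))) ∪
      (algebraMap (MvPolynomial (Fin m × Fin n × Fin n) F)
          (Matrix (Fin n) (Fin n) (MvPolynomial (Fin m × Fin n × Fin n) F)) ''
        (genericTraceRing F n m : Set (MvPolynomial (Fin m × Fin n × Fin n) F))))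

/-! A subalgebra `R` of `Mₙ(A)` generated by a finitely generated module `G` need not be graded, so
powers of `G` are separated by working with polynomials over `Mₙ(A)` whose `d`-th coefficient lies
in `G ^ d`. When such a polynomial has no constant term, the Cayley–Hamilton theorem expresses its
`n`-th power through lower powers, with coefficients that Newton's identities write in terms of
traces. Modulo these lower terms every element of the augmentation ideal satisfies `x ^ n = 0`, so
by the Nagata–Higman theorem that ideal is nilpotent of index `N = 2 ^ n - 1`. In degree `N` this
says that a product of `N` elements of `G` is a combination of shorter products, with coefficients
in the algebra generated by the traces of products of at most `N` elements of `G`. Hence that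
algebra contains all traces, and the shorter products generate `R` over it. -/

section TraceRings

open Polynomial Matrix Finset.HasAntidiagonal
open scoped Nat

theorem derivative_det_eq_trace_adjugate_mul {R ι : Type*} [CommRing R] [Fintype ι] [DecidableEq ι]
    (N : Matrix ι ι R[X]) :
    derivative N.det = (N.adjugate * N.map derivative).trace := by
  have diag_eq (i : ι) : (N.adjugate * N.map derivative) i i =
      (N.updateCol i fun j => derivative (N j i)).det := by
    rw [← cramer_apply, cramer_eq_adjugate_mulVec]
    rfl
  simp only [trace, diag_apply, diag_eq, det_apply]
  rw [Finset.sum_comm, derivative_sum]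
  refine Finset.sum_congr rfl fun σ _ => ?_
  rw [← Finset.smul_sum, Units.smul_def, derivative_smul, derivative_prod_finset]
  refine congrArg _ (Finset.sum_congr rfl fun i _ => ?_)
  rw [← Finset.prod_erase_mul _ _ (Finset.mem_univ i), updateCol_self]
  exact congrArg (· * _) (Finset.prod_congr rfl fun j hj =>
    (updateCol_ne (Finset.ne_of_mem_erase hj)).symm)

section CharpolyRev
variable {R ι : Type*} [CommRing R] [Fintype ι] [DecidableEq ι] (M : Matrix ι ι R)

-- `adjugate (1 - X M) = det (1 - X M) (1 - X M)⁻¹`, with the inverse expanded as `∑ X ^ j M ^ j`.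
theorem adjugate_one_sub_X_smul_map_coeff (k : ℕ) :
    (1 - (X : R[X]) • M.map C).adjugate.map (fun p : R[X] => p.coeff k) =
      ∑ ij ∈ antidiagonal k, M.charpolyRev.coeff ij.1 • M ^ ij.2 := by
  set Q := (1 - (X : R[X]) • M.map C).adjugate
  have hQ : Q = M.charpolyRev • (1 : Matrix ι ι R[X]) + (X : R[X]) • (Q * M.map C) := by
    rw [charpolyRev, ← adjugate_mul, mul_sub, mul_one, mul_smul_comm, sub_add_cancel]
  have map_coeff_mul (k : ℕ) : (Q * M.map C).map (fun p : R[X] => p.coeff k) =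
      Q.map (fun p : R[X] => p.coeff k) * M := by
    ext i j
    simp [mul_apply, finsetSum_coeff]
  induction k with
  | zero =>
    rw [hQ]
    ext i j
    simp [one_apply, apply_ite (coeff · 0)]
  | succ k ih =>
    rw [Finset.Nat.sum_antidiagonal_succ', pow_zero]
    simp only [pow_succ, ← smul_mul_assoc, ← Finset.sum_mul]
    rw [← ih, ← map_coeff_mul]
    nth_rw 1 [hQ]
    ext i j
    simp [one_apply, apply_ite (coeff · (k + 1))]

theorem succ_mul_coeff_charpolyRev (k : ℕ) :
    (k + 1) * M.charpolyRev.coeff (k + 1) =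
      -∑ ij ∈ antidiagonal k, M.charpolyRev.coeff ij.1 * (M ^ (ij.2 + 1)).trace := by
  set Q := (1 - (X : R[X]) • M.map C).adjugate with hQ
  have derivative_map : (1 - (X : R[X]) • M.map C).map derivative = -M.map C := by
    ext1 i j
    by_cases h : i = j <;> simp [h]
  have h := congrArg (coeff · k) (derivative_det_eq_trace_adjugate_mul (1 - (X : R[X]) • M.map C))
  rw [derivative_map, ← charpolyRev, coeff_derivative] at h
  have coeff_trace : (Q * M.map C).trace.coeff k = (Q.map (coeff · k) * M).trace := by
    simp [trace, mul_apply, finsetSum_coeff]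
  rw [mul_comm, h, mul_neg, trace_neg, coeff_neg, coeff_trace, hQ,
    adjugate_one_sub_X_smul_map_coeff, Finset.sum_mul, trace_sum]
  simp [pow_succ]

end CharpolyRev

theorem isUnit_natCast_of_isUnit_factorial {K : Type*} [CommSemiring K] {k n : ℕ}
    (hn : IsUnit (n ! : K)) (hk : 0 < k) (hkn : k ≤ n) : IsUnit (k : K) :=
  isUnit_of_dvd_unit (Nat.cast_dvd_cast (Nat.dvd_factorial hk hkn)) hn

theorem isUnit_natCast_factorial_of_le {K : Type*} [CommSemiring K] {m n : ℕ}
    (hn : IsUnit (n ! : K)) (hmn : m ≤ n) : IsUnit (m ! : K) :=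
  isUnit_of_dvd_unit (Nat.cast_dvd_cast (Nat.factorial_dvd_factorial hmn)) hn

section TracePow
variable {K A ι : Type*} [CommRing K] [CommRing A] [Algebra K A] [Fintype ι] [DecidableEq ι]
  {M : Matrix ι ι A} {S : Subalgebra K A}

theorem coeff_charpolyRev_mem_of_trace_pow_mem {k : ℕ} (hk : IsUnit (k ! : K))
    (hM : ∀ j, (M ^ j).trace ∈ S) : M.charpolyRev.coeff k ∈ S := by
  induction k using Nat.strong_induction_on with
  | _ k ih =>
    rcases k with _ | k
    · simp [coeff_zero_eq_eval_zero, one_mem]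
    have newton := succ_mul_coeff_charpolyRev M k
    have hsum : ((k + 1 : ℕ) : K) • M.charpolyRev.coeff (k + 1) ∈ S := by
      rw [Nat.cast_smul_eq_nsmul, nsmul_eq_mul, Nat.cast_succ, newton]
      refine neg_mem (sum_mem fun ij hij =>
        mul_mem (ih _ ?_ (isUnit_natCast_factorial_of_le hk ?_)) (hM _))
      all_goals have := Finset.HasAntidiagonal.mem_antidiagonal.1 hij; omega
    exact ((Subalgebra.toSubmodule S).smul_mem_iff_of_isUnit
      (isUnit_natCast_of_isUnit_factorial hk k.succ_pos le_rfl)).1 hsum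

theorem coeff_charpoly_mem_of_trace_pow_mem (hn : IsUnit ((Fintype.card ι)! : K))
    (hM : ∀ j, (M ^ j).trace ∈ S) (k : ℕ) : M.charpoly.coeff k ∈ S := by
  nontriviality A
  rcases le_or_gt k (Fintype.card ι) with hk | hk
  · have h := M.charpoly.coeff_reverse (Fintype.card ι - k)
    rw [charpoly_natDegree_eq_dim, revAt_le (Nat.sub_le _ _), Nat.sub_sub_self hk,
      reverse_charpoly] at h
    rw [← h]
    exact coeff_charpolyRev_mem_of_trace_pow_mem
      (isUnit_natCast_factorial_of_le hn (Nat.sub_le _ _)) hM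
  · rw [coeff_eq_zero_of_natDegree_lt (by rwa [charpoly_natDegree_eq_dim])]
    exact zero_mem S

end TracePow

theorem isUnit_natCast_superFactorial {K : Type*} [CommRing K] {n : ℕ} (hn : IsUnit (n ! : K)) :
    IsUnit (n.superFactorial : K) := by
  induction n with
  | zero => simp
  | succ n ih =>
    rw [Nat.superFactorial_succ, Nat.cast_mul]
    exact hn.mul (ih (isUnit_natCast_factorial_of_le hn n.le_succ))

theorem mem_of_forall_sum_natCast_pow_smul_mem {K M : Type*} [CommRing K] [AddCommGroup M]
    [Module K M] {V : Submodule K M} {n : ℕ} (hn : IsUnit (n ! : K)) {v : Fin (n + 1) → M}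
    (hv : ∀ c : Fin (n + 1), ∑ k : Fin (n + 1), ((c : ℕ) : K) ^ (k : ℕ) • v k ∈ V)
    (k : Fin (n + 1)) : v k ∈ V := by
  set W := vandermonde fun c : Fin (n + 1) => ((c : ℕ) : K) with hW
  have hdet : IsUnit W.det := by
    rw [hW, det_vandermonde_id_eq_superFactorial]
    exact isUnit_natCast_superFactorial hn
  have hvk : ∑ c, W⁻¹ k c • ∑ j, W c j • v j = v k := by
    simp only [Finset.smul_sum, smul_smul]
    rw [Finset.sum_comm]
    simp only [← Finset.sum_smul, ← mul_apply, nonsing_inv_mul W hdet, one_apply, ite_smul,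
      one_smul, zero_smul, Finset.sum_ite_eq, Finset.mem_univ, if_true]
  rw [← hvk]
  exact V.sum_mem fun c _ => V.smul_mem _ (hv c)

section NagataHigman
variable {K B : Type*} [CommRing K] [Ring B] [Algebra K B]

theorem coeff_mem_of_forall_eval_natCast_mem {V : Submodule K B} {q : B[X]} {n : ℕ}
    (hn : IsUnit (n ! : K)) (hq : q.natDegree ≤ n) (hV : ∀ c : ℕ, q.eval (c : B) ∈ V) (k : ℕ) :
    q.coeff k ∈ V := by
  rcases le_or_gt k n with hk | hk
  · refine mem_of_forall_sum_natCast_pow_smul_mem (v := fun j : Fin (n + 1) => q.coeff j) hn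
      (fun c => ?_) ⟨k, Nat.lt_succ_of_le hk⟩
    convert hV c using 1
    rw [eval_eq_sum_range' (Nat.lt_succ_of_le hq), ← Fin.sum_univ_eq_sum_range
      (fun j => q.coeff j * (c : B) ^ j)]
    refine Finset.sum_congr rfl fun j _ => ?_
    rw [Algebra.smul_def, map_pow, map_natCast, ((Nat.cast_commute _ _).pow_left _).eq]
  · rw [coeff_eq_zero_of_natDegree_lt (hq.trans_lt hk)]
    exact V.zero_mem

theorem coeff_zero_C_add_C_mul_X_pow (x y : B) (n : ℕ) :
    ((C x + C y * X) ^ n).coeff 0 = x ^ n := by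
  induction n with
  | zero => simp
  | succ n ih => simp [pow_succ, mul_coeff_zero, ih]

theorem coeff_one_C_add_C_mul_X_pow_succ (x y : B) (n : ℕ) :
    ((C x + C y * X) ^ (n + 1)).coeff 1 = ∑ ij ∈ antidiagonal n, x ^ ij.1 * y * x ^ ij.2 := by
  induction n with
  | zero => simp
  | succ n ih =>
    rw [pow_succ, mul_coeff_one, ih, coeff_zero_C_add_C_mul_X_pow,
      Finset.Nat.sum_antidiagonal_succ', Finset.sum_mul]
    simp [pow_succ, mul_assoc]

theorem natDegree_C_add_C_mul_X_pow_le (x y : B) (n : ℕ) :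
    ((C x + C y * X) ^ n).natDegree ≤ n := by
  compute_degree

theorem eval_natCast_C_add_C_mul_X_pow (x y : B) (n c : ℕ) :
    ((C x + C y * X) ^ n).eval (c : B) = (x + c • y) ^ n := by
  induction n with
  | zero => simp
  | succ n ih =>
    rw [pow_succ, mul_add, ← mul_assoc, eval_add, eval_mul_X,
      eval_mul_C_of_commute (Nat.commute_cast x c), eval_mul_C_of_commute (Nat.commute_cast y c),
      ih, pow_succ, mul_add, mul_assoc, nsmul_eq_mul, (Nat.commute_cast y c).eq]

theorem sum_antidiagonal_pow_mul_mul_pow_mem {P : AddSubmonoid B} {V : Submodule K B} {n : ℕ}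
    (hn : IsUnit ((n + 1)! : K)) (hV : ∀ x ∈ P, x ^ (n + 1) ∈ V) {x y : B} (hx : x ∈ P)
    (hy : y ∈ P) : ∑ ij ∈ antidiagonal n, x ^ ij.1 * y * x ^ ij.2 ∈ V := by
  rw [← coeff_one_C_add_C_mul_X_pow_succ]
  refine coeff_mem_of_forall_eval_natCast_mem hn (natDegree_C_add_C_mul_X_pow_le x y _)
    (fun c => ?_) 1
  rw [eval_natCast_C_add_C_mul_X_pow]
  exact hV _ (P.add_mem hx (P.nsmul_mem hy c))

-- Sum `x ^ i * z * y ^ k * x ^ j * y ^ l` over `i + j = n = k + l`. Summing over `(i, j)` first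
-- shows that the total lies in `V`. Summing over `(k, l)` first shows the same of the terms with
-- `0 < j`, and the terms with `j = 0` add up to `(n + 1) x ^ n z y ^ n`.
theorem pow_mul_mul_pow_mem {P V : Ideal B} [P.IsTwoSided] [V.IsTwoSided] {n : ℕ}
    (hn : IsUnit ((n + 1)! : K)) (hV : ∀ x ∈ P, x ^ (n + 1) ∈ V) {x y z : B} (hx : x ∈ P)
    (hy : y ∈ P) (hz : z ∈ P) : x ^ n * z * y ^ n ∈ V := by
  have linearized {x y : B} (hx : x ∈ P) (hy : y ∈ P) :
      ∑ ij ∈ antidiagonal n, x ^ ij.1 * y * x ^ ij.2 ∈ V :=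
    sum_antidiagonal_pow_mul_mul_pow_mem (P := P.toAddSubmonoid) (V := V.restrictScalars K)
      hn hV hx hy
  have sum_mem : ∑ ij ∈ antidiagonal n, ∑ kl ∈ antidiagonal n,
      x ^ ij.1 * z * y ^ kl.1 * x ^ ij.2 * y ^ kl.2 ∈ V := by
    rw [Finset.sum_comm]
    refine V.sum_mem fun kl _ => ?_
    rw [← Finset.sum_mul]
    simp only [mul_assoc _ z]
    exact V.mul_mem_right _ (linearized hx (P.mul_mem_right _ hz))
  have rest_mem : ∑ ij ∈ (antidiagonal n).erase (n, 0), ∑ kl ∈ antidiagonal n,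
      x ^ ij.1 * z * y ^ kl.1 * x ^ ij.2 * y ^ kl.2 ∈ V := by
    refine V.sum_mem fun ij hij => ?_
    obtain ⟨hne, hsum⟩ := Finset.mem_erase.1 hij
    have hj : 0 < ij.2 := by
      rw [Finset.HasAntidiagonal.mem_antidiagonal] at hsum
      by_contra! hj
      exact hne (Prod.ext (by omega) (by omega))
    simp only [mul_assoc, ← Finset.mul_sum]
    refine V.mul_mem_left _ (V.mul_mem_left _ ?_)
    simp only [← mul_assoc]
    exact linearized hy (P.pow_mem_of_mem hx _ hj)
  have main_term : ∑ kl ∈ antidiagonal n, x ^ n * z * y ^ kl.1 * x ^ 0 * y ^ kl.2 =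
      ((n + 1 : ℕ) : K) • (x ^ n * z * y ^ n) := by
    rw [Nat.cast_smul_eq_nsmul, ← Finset.Nat.card_antidiagonal n, ← Finset.sum_const]
    refine Finset.sum_congr rfl fun kl hkl => ?_
    rw [pow_zero, mul_one, mul_assoc _ (y ^ _), ← pow_add,
      Finset.HasAntidiagonal.mem_antidiagonal.1 hkl]
  rw [← Finset.add_sum_erase _ _ (show (n, 0) ∈ antidiagonal n by simp), main_term,
    V.add_mem_iff_left rest_mem] at sum_mem
  exact ((V.restrictScalars K).smul_mem_iff_of_isUnit
    (isUnit_natCast_of_isUnit_factorial hn n.succ_pos le_rfl)).1 sum_mem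

theorem span_pow_mul_mul_span_pow_le {P V : Ideal B} [P.IsTwoSided] [V.IsTwoSided] {n : ℕ}
    (hn : IsUnit ((n + 1)! : K)) (hV : ∀ x ∈ P, x ^ (n + 1) ∈ V) :
    Ideal.span ((· ^ n) '' (P : Set B)) * P * Ideal.span ((· ^ n) '' (P : Set B)) ≤ V := by
  have mul_mul_mem {u w : B} (hu : u ∈ Ideal.span ((· ^ n) '' (P : Set B)))
      (hw : w ∈ Ideal.span ((· ^ n) '' (P : Set B))) : ∀ z ∈ P, u * z * w ∈ V := by
    induction hw using Submodule.span_induction with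
    | mem w hw =>
      obtain ⟨y, hy, rfl⟩ := hw
      intro z hz
      induction hu using Submodule.span_induction with
      | mem u hu =>
        obtain ⟨x, hx, rfl⟩ := hu
        exact pow_mul_mul_pow_mem hn hV hx hy hz
      | zero => simp
      | add u u' _ _ hu hu' => simpa only [add_mul] using V.add_mem hu hu'
      | smul a u _ hu => simpa only [smul_eq_mul, mul_assoc] using V.mul_mem_left a hu
    | zero => simp
    | add w w' _ _ hw hw' =>
      exact fun z hz => by simpa only [mul_add] using V.add_mem (hw z hz) (hw' z hz)
    | smul a w _ hw =>
      exact fun z hz => by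
        simpa only [smul_eq_mul, mul_assoc] using hw (z * a) (P.mul_mem_right a hz)
  refine Ideal.mul_le.2 fun v hv w hw => ?_
  induction hv using Submodule.mul_induction_on' with
  | mem_mul_mem u hu z hz => exact mul_mul_mem hu hw z hz
  | add v _ v' _ hv hv' => simpa only [add_mul] using V.add_mem hv hv'

theorem nagata_higman {P V : Ideal B} [P.IsTwoSided] [V.IsTwoSided] {n : ℕ}
    (hn : IsUnit (n ! : K)) (hV : ∀ x ∈ P, x ^ n ∈ V) : P ^ (2 ^ n - 1) ≤ V := by
  induction n generalizing V with
  | zero =>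
    have hVtop : V = ⊤ := V.eq_top_iff_one.2 (by simpa using hV 0 P.zero_mem)
    exact hVtop ▸ le_top
  | succ n ih =>
    set I := Ideal.span ((· ^ n) '' (P : Set B))
    have pow_le : P ^ (2 ^ n - 1) ≤ I * ⊤ :=
      ih (isUnit_natCast_factorial_of_le hn n.le_succ) fun x hx => mul_one (x ^ n) ▸
        Ideal.mul_mem_mul (Ideal.subset_span (Set.mem_image_of_mem _ hx)) Submodule.mem_top
    have exponent : 2 ^ (n + 1) - 1 = 2 ^ n - 1 + 1 + (2 ^ n - 1) := by
      have := Nat.one_le_two_pow (n := n)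
      omega
    calc P ^ (2 ^ (n + 1) - 1) = P ^ (2 ^ n - 1) * P * P ^ (2 ^ n - 1) := by
          rw [exponent, Ideal.IsTwoSided.pow_add, Submodule.pow_succ]
      _ ≤ I * ⊤ * P * (I * ⊤) := Ideal.mul_mono (Ideal.mul_mono_left pow_le) pow_le
      _ = I * (⊤ * P) * I * ⊤ := by simp only [mul_assoc]
      _ ≤ I * P * I * ⊤ := Ideal.mul_mono_left (Ideal.mul_mono_left
          (Ideal.mul_mono_right Ideal.mul_le_right))
      _ ≤ V * ⊤ := Ideal.mul_mono_left (span_pow_mul_mul_span_pow_le hn hV)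
      _ ≤ V := Ideal.mul_le_left

end NagataHigman

section Rees
variable {K E : Type*} [CommRing K] [Ring E] [Algebra K E]

theorem coeff_mul_mem {U V W : ℕ → Submodule K E} (h : ∀ a b, U a * V b ≤ W (a + b)) {p q : E[X]}
    (hp : ∀ d, p.coeff d ∈ U d) (hq : ∀ d, q.coeff d ∈ V d) (d : ℕ) : (p * q).coeff d ∈ W d := by
  rw [coeff_mul]
  refine (W d).sum_mem fun ab hab => ?_
  rw [← Finset.HasAntidiagonal.mem_antidiagonal.1 hab]
  exact h _ _ (Submodule.mul_mem_mul (hp _) (hq _))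

/-- The Rees algebra of a graded family `W` of submodules, encoded as the algebra of polynomials
whose `d`-th coefficient lies in `W d`. -/
def reesSubalgebra (W : ℕ → Submodule K E) [SetLike.GradedMonoid W] : Subalgebra K E[X] where
  carrier := {p | ∀ d, p.coeff d ∈ W d}
  mul_mem' := coeff_mul_mem fun _ _ => Submodule.mul_le.2 fun _ hx _ hy =>
    SetLike.mul_mem_graded hx hy
  add_mem' {p q} hp hq d := by
    rw [coeff_add]
    exact (W d).add_mem (hp d) (hq d)
  algebraMap_mem' c d := by
    rw [Polynomial.algebraMap_apply, coeff_C]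
    split_ifs with h
    · rw [h, Algebra.algebraMap_eq_smul_one]
      exact (W 0).smul_mem c (SetLike.one_mem_graded W)
    · exact (W d).zero_mem

variable {W S : ℕ → Submodule K E} [SetLike.GradedMonoid W]

theorem mem_reesSubalgebra {p : E[X]} : p ∈ reesSubalgebra W ↔ ∀ d, p.coeff d ∈ W d := Iff.rfl

theorem monomial_mem_reesSubalgebra {d : ℕ} {x : E} (hx : x ∈ W d) :
    monomial d x ∈ reesSubalgebra W := fun e => by
  rw [coeff_monomial]
  split_ifs with h
  · exact h ▸ hx
  · exact (W e).zero_mem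

/-- The ideal of `reesSubalgebra W` of the polynomials whose `d`-th coefficient lies in `S d`. -/
def reesIdeal (W S : ℕ → Submodule K E) [SetLike.GradedMonoid W]
    (hl : ∀ a b, W a * S b ≤ S (a + b)) : Ideal (reesSubalgebra W) where
  carrier := {p | ∀ d, p.1.coeff d ∈ S d}
  zero_mem' d := (S d).zero_mem
  add_mem' {p q} hp hq d := by
    rw [Subalgebra.coe_add, coeff_add]
    exact (S d).add_mem (hp d) (hq d)
  smul_mem' p _ hq := coeff_mul_mem hl p.2 hq

theorem isTwoSided_reesIdeal (hl : ∀ a b, W a * S b ≤ S (a + b))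
    (hr : ∀ a b, S a * W b ≤ S (a + b)) : (reesIdeal W S hl).IsTwoSided where
  mul_mem_of_left q hp := coeff_mul_mem hr hp q.2

/-- The augmentation ideal of `reesSubalgebra W`: the polynomials without constant term. -/
noncomputable def reesAugmentationIdeal (W : ℕ → Submodule K E) [SetLike.GradedMonoid W] :
    Ideal (reesSubalgebra W) :=
  RingHom.ker (constantCoeff.comp (reesSubalgebra W).val.toRingHom)

instance : (reesAugmentationIdeal W).IsTwoSided :=
  inferInstanceAs (RingHom.ker _).IsTwoSided

theorem exists_mem_reesAugmentationIdeal_pow {k : ℕ} {x : E} (hx : x ∈ W 1 ^ k) :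
    ∃ p ∈ reesAugmentationIdeal W ^ k, (p : E[X]) = monomial k x := by
  induction k generalizing x with
  | zero =>
    obtain ⟨c, rfl⟩ := Submodule.mem_one.1 (pow_zero (W 1) ▸ hx)
    exact ⟨algebraMap K _ c, by simp [Submodule.pow_zero], rfl⟩
  | succ k ih =>
    rw [pow_succ] at hx
    induction hx using Submodule.mul_induction_on' with
    | mem_mul_mem y hy z hz =>
      obtain ⟨p, hp, hpy⟩ := ih hy
      refine ⟨p * ⟨monomial 1 z, monomial_mem_reesSubalgebra hz⟩, ?_, ?_⟩
      · rw [Submodule.pow_succ]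
        exact Ideal.mul_mem_mul hp (by simp [reesAugmentationIdeal, RingHom.mem_ker])
      · rw [Subalgebra.coe_mul, hpy, monomial_mul_monomial]
    | add y _ z _ hy hz =>
      obtain ⟨p, hp, hpy⟩ := hy
      obtain ⟨q, hq, hqz⟩ := hz
      exact ⟨p + q, add_mem hp hq, by rw [Subalgebra.coe_add, hpy, hqz, map_add]⟩

theorem pow_two_pow_sub_one_le_of_coeff_pow_mem {n : ℕ} (hn : IsUnit (n ! : K))
    (hl : ∀ a b, W a * S b ≤ S (a + b)) (hr : ∀ a b, S a * W b ≤ S (a + b))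
    (hS : ∀ p ∈ reesSubalgebra W, p.coeff 0 = 0 → ∀ d, (p ^ n).coeff d ∈ S d) :
    W 1 ^ (2 ^ n - 1) ≤ S (2 ^ n - 1) := by
  have := isTwoSided_reesIdeal hl hr
  have pow_le : reesAugmentationIdeal W ^ (2 ^ n - 1) ≤ reesIdeal W S hl :=
    nagata_higman hn fun p hp => hS p p.2 hp
  intro x hx
  obtain ⟨p, hp, hpx⟩ := exists_mem_reesAugmentationIdeal_pow hx
  simpa [hpx] using pow_le hp (2 ^ n - 1)

end Rees

section PowersBelow
variable {K E : Type*} [CommRing K] [Ring E] [Algebra K E]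

/-- The span `⨆ b < d, G ^ b` of the products of fewer than `d` elements of `G`. -/
def powersBelow (G : Submodule K E) (d : ℕ) : Submodule K E :=
  ⨆ b : Fin d, G ^ (b : ℕ)

variable {G : Submodule K E}

theorem pow_le_powersBelow {b d : ℕ} (h : b < d) : G ^ b ≤ powersBelow G d :=
  le_iSup (fun b : Fin d => G ^ (b : ℕ)) ⟨b, h⟩

theorem powersBelow_le {d : ℕ} {S : Submodule K E} (h : ∀ b < d, G ^ b ≤ S) : powersBelow G d ≤ S :=
  iSup_le fun b => h b b.2

theorem powersBelow_mono : Monotone (powersBelow G) := fun _ _ h =>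
  powersBelow_le fun _ hb => pow_le_powersBelow (hb.trans_le h)

theorem fg_powersBelow (hG : G.FG) (d : ℕ) : (powersBelow G d).FG :=
  Submodule.fg_iSup _ fun b => hG.pow b

theorem pow_mul_powersBelow_le (a d : ℕ) : G ^ a * powersBelow G d ≤ powersBelow G (a + d) := by
  rw [powersBelow, Submodule.mul_iSup]
  refine iSup_le fun b => ?_
  rw [← pow_add]
  exact pow_le_powersBelow (by omega)

theorem powersBelow_mul_pow_le (a d : ℕ) : powersBelow G d * G ^ a ≤ powersBelow G (d + a) := by
  rw [powersBelow, Submodule.iSup_mul]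
  refine iSup_le fun b => ?_
  rw [← pow_add]
  exact pow_le_powersBelow (by omega)

theorem powersBelow_le_adjoin (G : Submodule K E) (d : ℕ) :
    powersBelow G d ≤ Subalgebra.toSubmodule (Algebra.adjoin K (G : Set E)) :=
  powersBelow_le fun b hb x hx => by
    clear hb
    induction hx using Submodule.pow_induction_on_left' with
    | algebraMap c => exact (Algebra.adjoin K (G : Set E)).algebraMap_mem c
    | add x y _ _ _ hx hy => exact add_mem hx hy
    | mem_mul g hg _ x _ hx =>
      exact (Algebra.adjoin K (G : Set E)).mul_mem (Algebra.subset_adjoin hg) hx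

end PowersBelow

section SubalgebraSpan
variable {K A : Type*} [CommRing K] [CommRing A] [Algebra K A]

theorem map_mem_of_mem_span {M N : Type*} [AddCommGroup M] [Module A M] [AddCommGroup N]
    [Module A N] {C C' : Subalgebra K A} (hC : C ≤ C') (f : M →ₗ[A] N) {s : Set M}
    {Q : Submodule C' N} (hf : ∀ x ∈ s, f x ∈ Q) {x : M} (hx : x ∈ Submodule.span C s) :
    f x ∈ Q := by
  induction hx using Submodule.span_induction with
  | mem x hx => exact hf x hx
  | zero => simp
  | add x y _ _ hx hy => simpa using Q.add_mem hx hy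
  | smul c x _ hx =>
    rw [Subalgebra.smul_def, map_smul]
    exact Q.smul_mem ⟨c, hC c.2⟩ hx

variable {E : Type*} [Ring E] [Algebra A E] [Algebra K E]

theorem toSubmodule_adjoin_subalgebra (R : Subalgebra K E) (T : Subalgebra K A) :
    Subalgebra.toSubmodule (Algebra.adjoin T (R : Set E)) = Submodule.span T (R : Set E) := by
  rw [Algebra.adjoin_eq_span]
  exact congrArg _ (congrArg _ R.toSubmonoid.closure_eq)

theorem adjoin_union_image_algebraMap [IsScalarTower K A E] (R : Subalgebra K E)
    (T : Subalgebra K A) :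
    Algebra.adjoin K (R ∪ algebraMap A E '' T) =
      (Algebra.adjoin T (R : Set E)).restrictScalars K := by
  refine le_antisymm (Algebra.adjoin_le ?_) fun x hx => ?_
  · rintro x (hx | ⟨t, ht, rfl⟩)
    · exact (Subalgebra.mem_restrictScalars K).2 (Algebra.subset_adjoin hx)
    · exact (Subalgebra.mem_restrictScalars K).2
        ((Algebra.adjoin T (R : Set E)).algebraMap_mem ⟨t, ht⟩)
  · replace hx : x ∈ Algebra.adjoin T (R : Set E) := hx
    induction hx using Algebra.adjoin_induction with
    | mem x hx => exact Algebra.subset_adjoin (Or.inl hx)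
    | algebraMap t => exact Algebra.subset_adjoin (Or.inr ⟨t, t.2, rfl⟩)
    | add x y _ _ hx hy => exact add_mem hx hy
    | mul x y _ _ hx hy => exact mul_mem hx hy

end SubalgebraSpan

section BoundedTrace
variable {K A ι : Type*} [CommRing K] [CommRing A] [Algebra K A] [Fintype ι] [DecidableEq ι]

/-- The algebra generated by the traces of products of at most `d` elements of `G`. -/
def boundedTraceAlgebra (G : Submodule K (Matrix ι ι A)) (d : ℕ) : Subalgebra K A :=
  Algebra.adjoin K ((powersBelow G (d + 1)).map (traceLinearMap ι K A))

/-- The span of the products of fewer than `d` elements of `G`, with coefficients in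
`boundedTraceAlgebra G d`. -/
def boundedTraceSpan (G : Submodule K (Matrix ι ι A)) (d : ℕ) :
    Submodule (boundedTraceAlgebra G d) (Matrix ι ι A) :=
  Submodule.span _ (powersBelow G d : Set (Matrix ι ι A))

variable {G : Submodule K (Matrix ι ι A)}

theorem trace_mem_boundedTraceAlgebra {d : ℕ} {x : Matrix ι ι A} (hx : x ∈ powersBelow G (d + 1)) :
    x.trace ∈ boundedTraceAlgebra G d :=
  Algebra.subset_adjoin (Submodule.mem_map_of_mem hx)

theorem boundedTraceAlgebra_mono : Monotone (boundedTraceAlgebra G) := fun _ _ h =>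
  Algebra.adjoin_mono (Submodule.map_mono (powersBelow_mono (Nat.succ_le_succ h)))

instance : SetLike.GradedMonoid fun d => Subalgebra.toSubmodule (boundedTraceAlgebra G d) where
  one_mem := one_mem (boundedTraceAlgebra G 0)
  mul_mem a b _ _ hx hy :=
    (boundedTraceAlgebra G (a + b)).mul_mem (boundedTraceAlgebra_mono (Nat.le_add_right a b) hx)
      (boundedTraceAlgebra_mono (Nat.le_add_left b a) hy)

theorem pow_mul_boundedTraceSpan_le (a b : ℕ) :
    G ^ a * (boundedTraceSpan G b).restrictScalars K ≤
      (boundedTraceSpan G (a + b)).restrictScalars K :=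
  Submodule.mul_le.2 fun x hx _ hy =>
    map_mem_of_mem_span (boundedTraceAlgebra_mono (Nat.le_add_left b a)) (LinearMap.mulLeft A x)
      (fun _ hz => Submodule.subset_span
        (pow_mul_powersBelow_le a b (Submodule.mul_mem_mul hx hz))) hy

theorem boundedTraceSpan_mul_pow_le (a b : ℕ) :
    (boundedTraceSpan G a).restrictScalars K * G ^ b ≤
      (boundedTraceSpan G (a + b)).restrictScalars K :=
  Submodule.mul_le.2 fun _ hy x hx =>
    map_mem_of_mem_span (boundedTraceAlgebra_mono (Nat.le_add_right a b)) (LinearMap.mulRight A x)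
      (fun _ hz => Submodule.subset_span
        (powersBelow_mul_pow_le b a (Submodule.mul_mem_mul hz hx))) hy

theorem charpoly_coeff_mem_reesSubalgebra (hn : IsUnit ((Fintype.card ι)! : K))
    {p : (Matrix ι ι A)[X]} (hp : p ∈ reesSubalgebra fun d => G ^ d) (k : ℕ) :
    (matPolyEquiv.symm p).charpoly.coeff k ∈
      reesSubalgebra fun d => Subalgebra.toSubmodule (boundedTraceAlgebra G d) := by
  refine coeff_charpoly_mem_of_trace_pow_mem hn (fun j => mem_reesSubalgebra.2 fun d => ?_) k
  have coeff_trace : (matPolyEquiv.symm p ^ j).trace.coeff d = ((p ^ j).coeff d).trace := by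
    rw [← map_pow]
    simp only [trace, diag_apply, finsetSum_coeff, matPolyEquiv_symm_apply_coeff]
  rw [coeff_trace]
  exact trace_mem_boundedTraceAlgebra (pow_le_powersBelow d.lt_succ_self (pow_mem hp j d))

theorem coeff_zero_charpoly_coeff_matPolyEquiv_symm {p : (Matrix ι ι A)[X]} (hp : p.coeff 0 = 0)
    {k : ℕ} (hk : k < Fintype.card ι) : ((matPolyEquiv.symm p).charpoly.coeff k).coeff 0 = 0 := by
  have map_eq_zero : (matPolyEquiv.symm p).map (constantCoeff (R := A)) = 0 := by
    ext i j
    simp [matPolyEquiv_symm_apply_coeff, hp]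
  rw [← constantCoeff_apply, ← coeff_map, ← charpoly_map, map_eq_zero, charpoly_zero,
    coeff_X_pow, if_neg hk.ne]

theorem pow_card_eq_neg_sum_charpoly_coeff_matPolyEquiv_symm (p : (Matrix ι ι A)[X]) :
    p ^ Fintype.card ι = -∑ k ∈ Finset.range (Fintype.card ι),
      ((matPolyEquiv.symm p).charpoly.coeff k).map (algebraMap A (Matrix ι ι A)) * p ^ k := by
  nontriviality A
  have h := congrArg matPolyEquiv (aeval_self_charpoly (matPolyEquiv.symm p))
  rw [aeval_eq_sum_range, charpoly_natDegree_eq_dim, Finset.sum_range_succ] at h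
  have coeff_card : (matPolyEquiv.symm p).charpoly.coeff (Fintype.card ι) = 1 := by
    simpa using (matPolyEquiv.symm p).charpoly_monic.coeff_natDegree
  rw [coeff_card, one_smul, map_zero, map_add, map_sum] at h
  simp only [matPolyEquiv_map_smul, map_pow, AlgEquiv.apply_symm_apply] at h
  exact eq_neg_of_add_eq_zero_right h

theorem coeff_pow_card_mem_boundedTraceSpan (hn : IsUnit ((Fintype.card ι)! : K))
    {p : (Matrix ι ι A)[X]} (hp : p ∈ reesSubalgebra fun d => G ^ d) (hp0 : p.coeff 0 = 0) (d : ℕ) :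
    (p ^ Fintype.card ι).coeff d ∈ boundedTraceSpan G d := by
  rw [pow_card_eq_neg_sum_charpoly_coeff_matPolyEquiv_symm, coeff_neg, finsetSum_coeff]
  refine neg_mem (sum_mem fun k hk => ?_)
  rw [coeff_mul]
  refine sum_mem fun ab hab => ?_
  have hab := Finset.HasAntidiagonal.mem_antidiagonal.1 hab
  rw [coeff_map, ← Algebra.smul_def]
  rcases Nat.eq_zero_or_pos ab.1 with ha | ha
  · rw [ha, coeff_zero_charpoly_coeff_matPolyEquiv_symm hp0 (Finset.mem_range.1 hk), zero_smul]
    exact zero_mem _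
  · have coeff_mem := boundedTraceAlgebra_mono (show ab.1 ≤ d by omega)
      (charpoly_coeff_mem_reesSubalgebra hn hp k ab.1)
    exact (boundedTraceSpan G d).smul_mem ⟨_, coeff_mem⟩
      (Submodule.subset_span (pow_le_powersBelow (by omega) (pow_mem hp k ab.2)))

theorem pow_le_boundedTraceSpan (hn : IsUnit ((Fintype.card ι)! : K)) :
    G ^ (2 ^ Fintype.card ι - 1) ≤
      (boundedTraceSpan G (2 ^ Fintype.card ι - 1)).restrictScalars K := by
  have h := pow_two_pow_sub_one_le_of_coeff_pow_mem (W := fun d => G ^ d)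
    (S := fun d => (boundedTraceSpan G d).restrictScalars K) hn pow_mul_boundedTraceSpan_le
    boundedTraceSpan_mul_pow_le fun p hp hp0 => coeff_pow_card_mem_boundedTraceSpan hn hp hp0
  simpa using h

theorem adjoin_le_boundedTraceSpan {N : ℕ}
    (hN : G ^ N ≤ (boundedTraceSpan G N).restrictScalars K) :
    Subalgebra.toSubmodule (Algebra.adjoin K (G : Set (Matrix ι ι A))) ≤
      (boundedTraceSpan G N).restrictScalars K := by
  have pow_le {b : ℕ} (hb : b ≤ N) : G ^ b ≤ (boundedTraceSpan G N).restrictScalars K := by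
    rcases hb.lt_or_eq with hb | rfl
    · exact (pow_le_powersBelow hb).trans Submodule.subset_span
    · exact hN
  refine (Algebra.adjoin_toSubmodule_le K).2 fun x hx => ?_
  induction hx using Submonoid.closure_induction_left with
  | one => exact pow_le N.zero_le (by rw [pow_zero]; exact Submodule.one_le.1 le_rfl)
  | mul_left g hg x _ hx =>
    have powersBelow_le_comap : powersBelow G N ≤
        ((boundedTraceSpan G N).restrictScalars K).comap (LinearMap.mulLeft K g) :=
      powersBelow_le fun b hb y hy => pow_le hb (by
        rw [pow_succ']; exact Submodule.mul_mem_mul hg hy)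
    exact map_mem_of_mem_span le_rfl (LinearMap.mulLeft A g) powersBelow_le_comap hx

theorem trace_mem_boundedTraceAlgebra_of_mem_span {d : ℕ} {x : Matrix ι ι A}
    (hx : x ∈ boundedTraceSpan G d) : x.trace ∈ boundedTraceAlgebra G d := by
  have trace_mem_bot := map_mem_of_mem_span le_rfl (traceLinearMap ι A A)
    (Q := Subalgebra.toSubmodule (⊥ : Subalgebra (boundedTraceAlgebra G d) A)) (fun y hy => ?_) hx
  · obtain ⟨c, hc⟩ := Algebra.mem_bot.1 trace_mem_bot
    exact (show c = x.trace from hc) ▸ c.2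
  · exact Algebra.mem_bot.2
      ⟨⟨_, trace_mem_boundedTraceAlgebra (powersBelow_mono d.le_succ hy)⟩, rfl⟩

/-- The trace ring of `R`: the algebra generated by the coefficients of the characteristic
polynomials of the elements of `R`. -/
noncomputable def traceRing (R : Subalgebra K (Matrix ι ι A)) : Subalgebra K A :=
  Algebra.adjoin K {a | ∃ u ∈ R, ∃ i : ℕ, a = u.charpoly.coeff i}

/-- The trace closure of `R`: the algebra generated by `R` and the scalar matrices with entries
in `traceRing R`. -/
noncomputable def traceClosure (R : Subalgebra K (Matrix ι ι A)) : Subalgebra K (Matrix ι ι A) :=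
  Algebra.adjoin K (R ∪ algebraMap A (Matrix ι ι A) '' traceRing R)

theorem trace_mem_traceRing {R : Subalgebra K (Matrix ι ι A)} {x : Matrix ι ι A} (hx : x ∈ R) :
    x.trace ∈ traceRing R := by
  cases isEmpty_or_nonempty ι
  · simp [zero_mem]
  · rw [trace_eq_neg_charpoly_coeff]
    exact neg_mem (Algebra.subset_adjoin ⟨x, hx, _, rfl⟩)

theorem fg_boundedTraceAlgebra (hG : G.FG) (d : ℕ) : (boundedTraceAlgebra G d).FG := by
  obtain ⟨s, hs⟩ := (fg_powersBelow hG (d + 1)).map (traceLinearMap ι K A)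
  exact ⟨s, by rw [boundedTraceAlgebra, ← hs, Algebra.adjoin_span]⟩

theorem traceRing_adjoin (hn : IsUnit ((Fintype.card ι)! : K))
    (G : Submodule K (Matrix ι ι A)) :
    traceRing (Algebra.adjoin K (G : Set (Matrix ι ι A))) =
      boundedTraceAlgebra G (2 ^ Fintype.card ι - 1) := by
  refine le_antisymm (Algebra.adjoin_le ?_) (Algebra.adjoin_le ?_)
  · rintro _ ⟨u, hu, k, rfl⟩
    exact coeff_charpoly_mem_of_trace_pow_mem hn (fun j =>
      trace_mem_boundedTraceAlgebra_of_mem_span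
        (adjoin_le_boundedTraceSpan (pow_le_boundedTraceSpan hn) (pow_mem hu j))) k
  · rintro _ ⟨x, hx, rfl⟩
    exact trace_mem_traceRing (powersBelow_le_adjoin G _ hx)

theorem fg_traceRing (hn : IsUnit ((Fintype.card ι)! : K)) {R : Subalgebra K (Matrix ι ι A)}
    (hR : R.FG) : (traceRing R).FG := by
  obtain ⟨s, rfl⟩ := hR
  rw [← Algebra.adjoin_span, traceRing_adjoin hn]
  exact fg_boundedTraceAlgebra (Submodule.fg_span s.finite_toSet) _

theorem exists_finset_span_traceRing_eq (hn : IsUnit ((Fintype.card ι)! : K))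
    {R : Subalgebra K (Matrix ι ι A)} (hR : R.FG) :
    ∃ s : Finset (Matrix ι ι A), (s : Set (Matrix ι ι A)) ⊆ R ∧
      Submodule.span (traceRing R) (s : Set (Matrix ι ι A)) = Submodule.span (traceRing R) R := by
  obtain ⟨r, rfl⟩ := hR
  rw [← Algebra.adjoin_span]
  set G := Submodule.span K (r : Set (Matrix ι ι A))
  obtain ⟨s, hs⟩ := fg_powersBelow (Submodule.fg_span r.finite_toSet : G.FG)
    (2 ^ Fintype.card ι - 1)
  have subset_adjoin : (s : Set (Matrix ι ι A)) ⊆ Algebra.adjoin K (G : Set (Matrix ι ι A)) :=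
    fun x hx => powersBelow_le_adjoin G _ (hs ▸ Submodule.subset_span hx)
  refine ⟨s, subset_adjoin, (Submodule.span_mono subset_adjoin).antisymm ?_⟩
  rw [← Submodule.span_span_of_tower K _ (s : Set (Matrix ι ι A)), hs, Submodule.span_le]
  exact fun x hx => map_mem_of_mem_span (traceRing_adjoin hn G).ge (LinearMap.id (R := A))
    (fun _ hy => Submodule.subset_span hy)
    (adjoin_le_boundedTraceSpan (pow_le_boundedTraceSpan hn) hx)

theorem genericTraceRing_fg_and_noetherian_general [IsNoetherianRing K]
    (hn : IsUnit ((Fintype.card ι)! : K)) {R : Subalgebra K (Matrix ι ι A)} (hR : R.FG) :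
    (traceRing R).FG ∧
    (∃ s : Finset (Matrix ι ι A), (s : Set (Matrix ι ι A)) ⊆ traceClosure R ∧
      ∀ x ∈ traceClosure R, x ∈ Submodule.span (traceRing R) (s : Set (Matrix ι ι A))) ∧
    IsNoetherianRing (traceRing R) ∧
    IsNoetherianRing (traceClosure R) := by
  have fg := fg_traceRing hn hR
  have : Algebra.FiniteType K (traceRing R) := (Subalgebra.fg_iff_finiteType _).1 fg
  have noetherian : IsNoetherianRing (traceRing R) := Algebra.FiniteType.isNoetherianRing K _
  obtain ⟨s, hsR, hs⟩ := exists_finset_span_traceRing_eq hn hR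
  have span_eq : Submodule.span (traceRing R) s =
      Subalgebra.toSubmodule (Algebra.adjoin (traceRing R) (R : Set (Matrix ι ι A))) := by
    rw [hs, toSubmodule_adjoin_subalgebra]
  have closure_eq : traceClosure R = (Algebra.adjoin (traceRing R)
      (R : Set (Matrix ι ι A))).restrictScalars K := adjoin_union_image_algebraMap R _
  refine ⟨fg, ⟨s, hsR.trans fun x hx => Algebra.subset_adjoin (Or.inl hx), fun x hx => ?_⟩,
    noetherian, ?_⟩
  · rw [span_eq]
    exact (closure_eq ▸ hx :)
  · rw [closure_eq]
    have : Module.Finite (traceRing R) (Algebra.adjoin (traceRing R) (R : Set (Matrix ι ι A))) :=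
      Module.Finite.iff_fg.2 ⟨s, span_eq⟩
    exact IsNoetherianRing.of_finite (traceRing R)
      (Algebra.adjoin (traceRing R) (R : Set (Matrix ι ι A)))

end BoundedTrace

end TraceRings

/-- `T_{n,m}` is a finitely generated commutative `F`-algebra and `R_{n,m}·T_{n,m}` is a
finitely generated `T_{n,m}`-module; in particular both are Noetherian. -/
theorem genericTraceRing_fg_and_noetherian (F : Type) [Field F] [CharZero F]
    (n m : ℕ) (hn : 1 ≤ n) (hm : 1 ≤ m) :
    (genericTraceRing F n m).FG ∧
    (∃ s : Finset (Matrix (Fin n) (Fin n) (MvPolynomial (Fin m × Fin n × Fin n) F)),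
      (↑s : Set (Matrix (Fin n) (Fin n) (MvPolynomial (Fin m × Fin n × Fin n) F))) ⊆
        genericTraceMatrixAlgebra F n m ∧
      ∀ x ∈ genericTraceMatrixAlgebra F n m,
        x ∈ Submodule.span (genericTraceRing F n m)
          (↑s : Set (Matrix (Fin n) (Fin n) (MvPolynomial (Fin m × Fin n × Fin n) F)))) ∧
    IsNoetherianRing (genericTraceRing F n m) ∧
    IsNoetherianRing (genericTraceMatrixAlgebra F n m) := by
  have isUnit_factorial : IsUnit ((Fintype.card (Fin n)).factorial : F) :=
    isUnit_iff_ne_zero.2 (Nat.cast_ne_zero.2 (Nat.factorial_ne_zero _))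
  have fg : (genericMatrixAlgebra F n m).FG :=
    Subalgebra.fg_def.2 ⟨_, Set.finite_range _, rfl⟩
  exact genericTraceRing_fg_and_noetherian_general isUnit_factorial fg
end

section
/- Let F be a field of characteristic 0 and let n ≥ 2, m ≥ 2. The inclusion R_{n,m} ⊆ R_{n,m}·T_{n,m} has a nonzero conductor: there exists a nonzero subset I ⊆ R_{n,m} that is simultaneously a two-sided ideal of R_{n,m} and a two-sided ideal of R_{n,m}·T_{n,m}. (Razmyslov's conductor theorem.) -/
/-!
Write `R`, `T` and `A` for `R_{n,m}`, `T_{n,m}` and the polynomial ring. The determinants of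
`n²`-tuples of elements of `R`, in the standard basis `b` of `Mₙ(A)`, span a subspace `D` of `A`.
Expanding the determinant of a product shows that `D` is stable under multiplication by the
coefficients of the characteristic polynomial of `w ↦ z w` on `Mₙ(A)`, for every `z ∈ R`. This
polynomial is `χ_zⁿ`, and since `n` is invertible the coefficients of `χ_z` are polynomials in
those of `χ_zⁿ`; hence `T D ⊆ D`.

An `A`-multilinear alternating map `f` of `n²` arguments in `Mₙ(A)` satisfies
`f v = det v • f b`. If `f` maps tuples of elements of `R` into `R`, then `D • f b ⊆ R`, and so
`T • f v ⊆ R` for all tuples `v` of elements of `R`: such values lie in the conductor. The Capelli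
map with coefficients in `R` is such an `f`. It does not vanish, because with matrix units for
coefficients an entry of it is a determinant, and specialization maps `R` onto `Mₙ(F)`.
-/

section MonicPower

open Polynomial

variable {A : Type*} [CommRing A]

lemma coeff_pow_sub_pow {p u : A[X]} (hp : p.Monic) (hu : u.Monic)
    (hdeg : u.natDegree = p.natDegree) (n : ℕ) {j : ℕ} (hj : (p - u).natDegree ≤ j) :
    (p ^ n - u ^ n).coeff (j + (n - 1) * p.natDegree) = n * (p - u).coeff j := by
  have coeff_summand : ∀ i ∈ Finset.range n, ((p - u) * (p ^ i * u ^ (n - 1 - i))).coeff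
      (j + (n - 1) * p.natDegree) = (p - u).coeff j := by
    intro i hi
    have monic_cofactor : (p ^ i * u ^ (n - 1 - i)).Monic := (hp.pow i).mul (hu.pow _)
    have natDegree_cofactor : (p ^ i * u ^ (n - 1 - i)).natDegree = (n - 1) * p.natDegree := by
      rw [(hp.pow i).natDegree_mul (hu.pow _), hp.natDegree_pow, hu.natDegree_pow, hdeg, ← add_mul,
        Nat.add_sub_cancel' (Nat.le_sub_one_of_lt (Finset.mem_range.mp hi))]
    rw [coeff_mul_add_eq_of_natDegree_le hj natDegree_cofactor.le, ← natDegree_cofactor,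
      monic_cofactor.coeff_natDegree, mul_one]
  rw [← (Commute.all p u).mul_geom_sum₂ n, Finset.mul_sum, finsetSum_coeff,
    Finset.sum_congr rfl coeff_summand, Finset.sum_const, Finset.card_range, nsmul_eq_mul]

variable {F : Type*} [CommRing F] [Algebra F A]

lemma exists_monic_lifts_natDegree_sub_le {p : A[X]} (hp : p.Monic) (S : Subalgebra F A) {j : ℕ}
    (hj : j < p.natDegree) (higher : ∀ i > j, p.coeff i ∈ S) :
    ∃ u : A[X], u.Monic ∧ u.natDegree = p.natDegree ∧ (p - u).natDegree ≤ j ∧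
      u ∈ lifts (algebraMap S A) ∧ u.coeff j = 0 := by
  set q := PowerSeries.trunc (j + 1) (p : PowerSeries A)
  have coeff_q (i : ℕ) : q.coeff i = if i < j + 1 then p.coeff i else 0 := by
    rw [PowerSeries.coeff_trunc, Polynomial.coeff_coe]
  have natDegree_q : q.natDegree ≤ j := Nat.lt_succ_iff.mp (PowerSeries.natDegree_trunc_lt _ _)
  have natDegree_q_lt : q.natDegree < p.natDegree := natDegree_q.trans_lt hj
  refine ⟨p - q, hp.sub_of_left (degree_lt_degree natDegree_q_lt),
    natDegree_sub_eq_left_of_natDegree_lt natDegree_q_lt, by rwa [sub_sub_cancel],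
    (lifts_iff_coeff_lifts _).mpr fun i ↦ ?_, by simp [coeff_q]⟩
  suffices (p - q).coeff i ∈ S from ⟨⟨_, this⟩, rfl⟩
  rw [coeff_sub, coeff_q]
  split_ifs with hi
  · exact sub_self (p.coeff i) ▸ S.zero_mem
  · exact (sub_zero (p.coeff i)).symm ▸ higher i (by lia)

theorem coeff_mem_of_coeff_pow_mem {p : A[X]} (hp : p.Monic) {n : ℕ} (hn : IsUnit (n : F))
    (S : Subalgebra F A) (hS : ∀ k, (p ^ n).coeff k ∈ S) (k : ℕ) : p.coeff k ∈ S := by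
  refine Nat.strong_decreasing_induction (P := fun k ↦ p.coeff k ∈ S)
    ⟨p.natDegree, fun k hk ↦ coeff_eq_zero_of_natDegree_lt hk ▸ S.zero_mem⟩
    (fun j higher ↦ ?_) k
  obtain hj | rfl | hj := lt_trichotomy j p.natDegree
  · obtain ⟨u, hu, hdeg, hle, u_lifts, hu0⟩ :=
      exists_monic_lifts_natDegree_sub_le hp S hj higher
    have u_pow_mem (i : ℕ) : (u ^ n).coeff i ∈ S := by
      obtain ⟨a, ha⟩ := (lifts_iff_coeff_lifts _).mp (pow_mem u_lifts n) i
      exact ha ▸ a.2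
    have natCast_mul_mem : (n : A) * p.coeff j ∈ S := by
      have leading := coeff_pow_sub_pow hp hu hdeg n hle
      rw [coeff_sub, coeff_sub, hu0, sub_zero] at leading
      exact leading ▸ S.sub_mem (hS _) (u_pow_mem _)
    obtain ⟨c, hc⟩ := hn.exists_left_inv
    have : p.coeff j = c • ((n : A) * p.coeff j) := by
      rw [← map_natCast (algebraMap F A), ← Algebra.smul_def, smul_smul, hc, one_smul]
    exact this ▸ S.smul_mem natCast_mul_mem c
  · exact hp.coeff_natDegree ▸ S.one_mem
  · exact coeff_eq_zero_of_natDegree_lt hj ▸ S.zero_mem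

end MonicPower

section Determinant

open Polynomial Matrix Module Finset

variable {A κ : Type*} [CommRing A] [Fintype κ] [DecidableEq κ]

theorem coeff_det_X_smul_add (P Q : Matrix κ κ A) (k : ℕ) :
    (det ((X : A[X]) • P.map C + Q.map C)).coeff k =
      ∑ s ∈ univ.powersetCard k, det (of (s.piecewise P Q)) := by
  have expand : det ((X : A[X]) • P.map C + Q.map C) =
      ∑ s : Finset κ, det (of (s.piecewise ((X : A[X]) • P.map C) (Q.map C))) :=
    detRowAlternating.map_add_univ _ _
  have summand (s : Finset κ) : det (of (s.piecewise ((X : A[X]) • P.map C) (Q.map C))) =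
      monomial #s (det (of (s.piecewise P Q))) := by
    set N : Matrix κ κ A[X] := (of (s.piecewise P Q)).map C
    have rows : s.piecewise ((X : A[X]) • P.map C) (Q.map C) =
        s.piecewise (fun i ↦ (X : A[X]) • N i) N := by
      funext i j
      by_cases hi : i ∈ s <;> simp [N, Finset.piecewise, hi]
    calc det (of (s.piecewise ((X : A[X]) • P.map C) (Q.map C)))
      _ = (∏ _i ∈ s, (X : A[X])) • det N :=
        rows ▸ detRowAlternating.map_piecewise_smul (fun _ ↦ X) N s
      _ = monomial #s (det (of (s.piecewise P Q))) := by
        rw [prod_const, smul_eq_mul, ← C_mul_X_pow_eq_monomial, mul_comm, RingHom.map_det]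
        rfl
  simp_rw [expand, summand, finsetSum_coeff, coeff_monomial, ← Finset.sum_filter]
  congr 1
  ext s
  simp

variable {M : Type*} [AddCommGroup M] [Module A M] [Module.Free A M] [Module.Finite A M]

theorem coeff_charpoly_mul_det (b : Basis κ A M) (g : M →ₗ[A] M) (v : κ → M) (k : ℕ) :
    g.charpoly.coeff k * b.det v =
      ∑ s ∈ univ.powersetCard k, b.det (s.piecewise v (-(g ∘ v))) := by
  set G := LinearMap.toMatrix b b g
  set V := b.toMatrix v
  have mul_col : G * V = b.toMatrix (g ∘ v) := by
    simp only [G, V, b.toMatrix_eq_toMatrix_constr, ← LinearMap.toMatrix_comp, b.constr_comp]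
  calc g.charpoly.coeff k * b.det v
    _ = (det ((charmatrix G * V.map C)ᵀ)).coeff k := by
      rw [det_transpose, det_mul, ← RingHom.mapMatrix_apply, ← RingHom.map_det, coeff_mul_C,
        b.det_apply, ← LinearMap.charpoly_toMatrix g b]
      rfl
    _ = (det ((X : A[X]) • Vᵀ.map C + (-(G * V)ᵀ).map C)).coeff k := by
      congr 2
      rw [charmatrix, sub_mul, RingHom.mapMatrix_apply, ← Matrix.map_mul, scalar_apply,
        ← smul_eq_diagonal_mul, transpose_sub, sub_eq_add_neg, transpose_smul, transpose_map,
        Matrix.map_neg C (map_neg C), transpose_map]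
    _ = ∑ s ∈ univ.powersetCard k, b.det (s.piecewise v (-(g ∘ v))) := by
      rw [coeff_det_X_smul_add]
      refine sum_congr rfl fun s _ ↦ ?_
      rw [b.det_apply, ← det_transpose, mul_col]
      congr 1
      ext i j
      by_cases hj : j ∈ s <;> simp [V, Basis.toMatrix_apply, Finset.piecewise, hj]

end Determinant

section DetSpan

open Module

variable {F A κ M : Type*} [CommRing F] [CommRing A] [Algebra F A] [Fintype κ] [DecidableEq κ]
  [AddCommGroup M] [Module F M] [Module A M]

/-- The `F`-span in `A` of the determinants, in the `A`-basis `b` of `M`, of families of vectors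
of the `F`-submodule `S`. -/
noncomputable def detSpan (b : Basis κ A M) (S : Submodule F M) : Submodule F A :=
  Submodule.span F {a | ∃ v : κ → M, (∀ k, v k ∈ S) ∧ b.det v = a}

lemma det_mem_detSpan (b : Basis κ A M) {S : Submodule F M} {v : κ → M} (hv : ∀ k, v k ∈ S) :
    b.det v ∈ detSpan b S :=
  Submodule.subset_span ⟨v, hv, rfl⟩

/-- The multiplier ring `{a | a D ⊆ D}` of an `F`-submodule `D` of `A`. -/
def multiplierRing (D : Submodule F A) : Subalgebra F A :=
  (D / D).toSubalgebra (Submodule.mem_div_iff_forall_mul_mem.mpr fun d hd ↦ by rwa [one_mul])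
    fun a a' ha ha' ↦ Submodule.mem_div_iff_forall_mul_mem.mpr fun d hd ↦ by
      rw [Submodule.mem_div_iff_forall_mul_mem] at ha ha'
      exact mul_assoc a a' d ▸ ha _ (ha' d hd)

lemma mem_multiplierRing {D : Submodule F A} {a : A} :
    a ∈ multiplierRing D ↔ ∀ d ∈ D, a * d ∈ D :=
  Submodule.mem_div_iff_forall_mul_mem

theorem coeff_charpoly_mem_multiplierRing [Module.Free A M] [Module.Finite A M]
    (b : Basis κ A M) {S : Submodule F M} {g : M →ₗ[A] M} (hg : ∀ x ∈ S, g x ∈ S) (k : ℕ) :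
    g.charpoly.coeff k ∈ multiplierRing (detSpan b S) := by
  suffices detSpan b S ≤ (detSpan b S).comap (LinearMap.mulLeft F (g.charpoly.coeff k)) from
    mem_multiplierRing.mpr this
  refine Submodule.span_le.mpr ?_
  rintro _ ⟨v, hv, rfl⟩
  simp only [SetLike.mem_coe, Submodule.mem_comap, LinearMap.mulLeft_apply, coeff_charpoly_mul_det]
  refine sum_mem fun s _ ↦ det_mem_detSpan b fun i ↦ ?_
  by_cases hi : i ∈ s
  · simpa [hi] using hv i
  · simpa [hi] using hg _ (hv i)

end DetSpan

section MulLeft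

open Matrix Polynomial Kronecker

lemma stdBasis_repr_apply {R m n : Type*} [Semiring R] [Fintype m] [Finite n] (w : Matrix m n R)
    (p : m × n) : (stdBasis R m n).repr w p = w p.1 p.2 := by
  simp [stdBasis]

variable {A ι : Type*} [CommRing A] [Fintype ι] [DecidableEq ι]

lemma toMatrix_stdBasis_mulLeft (z : Matrix ι ι A) :
    LinearMap.toMatrix (stdBasis A ι ι) (stdBasis A ι ι) (LinearMap.mulLeft A z) =
      z ⊗ₖ (1 : Matrix ι ι A) := by
  ext ⟨i, j⟩ ⟨k, l⟩
  rw [LinearMap.toMatrix_apply, stdBasis_eq_single, stdBasis_repr_apply, LinearMap.mulLeft_apply,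
    kronecker_apply, one_apply]
  obtain rfl | hjl := eq_or_ne j l
  · simp
  · simp [hjl]

theorem charpoly_mulLeft (z : Matrix ι ι A) :
    (LinearMap.mulLeft A z).charpoly = z.charpoly ^ Fintype.card ι := by
  have charmatrix_kronecker_one : charmatrix (z ⊗ₖ (1 : Matrix ι ι A)) =
      charmatrix z ⊗ₖ (1 : Matrix ι ι A[X]) := by
    ext ⟨i, j⟩ ⟨k, l⟩
    obtain rfl | hjl := eq_or_ne j l
    · obtain rfl | hik := eq_or_ne i k
      · simp
      · simp [hik]
    · simp [charmatrix_apply, hjl]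
  rw [← LinearMap.charpoly_toMatrix _ (stdBasis A ι ι), toMatrix_stdBasis_mulLeft, Matrix.charpoly,
    charmatrix_kronecker_one, det_kronecker, det_one, one_pow, mul_one, Matrix.charpoly]

end MulLeft

theorem coeff_charpoly_mem_multiplierRing_of_mem {F A ι κ : Type*} [CommRing F] [CommRing A]
    [Algebra F A] [Fintype ι] [DecidableEq ι] [Fintype κ] [DecidableEq κ]
    (hι : IsUnit (Fintype.card ι : F)) (b : Module.Basis κ A (Matrix ι ι A))
    {R : Subalgebra F (Matrix ι ι A)} {z : Matrix ι ι A} (hz : z ∈ R) (k : ℕ) :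
    z.charpoly.coeff k ∈ multiplierRing (detSpan b R.toSubmodule) :=
  coeff_mem_of_coeff_pow_mem z.charpoly_monic hι _ (fun k ↦ charpoly_mulLeft z ▸
    coeff_charpoly_mem_multiplierRing b (fun _ hw ↦ R.mul_mem hz hw) k) k

section AlternatingMap

open Module

variable {A κ M N : Type*} [CommRing A] [Fintype κ] [DecidableEq κ] [AddCommGroup M] [Module A M]
  [AddCommGroup N] [Module A N]

theorem alternatingMap_apply_eq_det_smul (b : Basis κ A M) (f : M [⋀^κ]→ₗ[A] N) (v : κ → M) :
    f v = b.det v • f b := by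
  suffices f = (LinearMap.toSpanSingleton A N (f b)).compAlternatingMap b.det by
    conv_lhs => rw [this]
    simp
  refine Basis.ext_alternating b fun i hi ↦ ?_
  let σ : Equiv.Perm κ := Equiv.ofBijective i (Finite.injective_iff_bijective.1 hi)
  change f (b ∘ σ) = b.det (b ∘ σ) • f b
  simp [AlternatingMap.map_perm, Basis.det_self]

end AlternatingMap

section Conductor

variable {F A B : Type*} [CommRing F] [CommRing A] [Ring B] [Algebra F A] [Algebra F B]
  [Algebra A B] [IsScalarTower F A B]

/-- The conductor `{w | T w ⊆ R}` of `R` in the subalgebra `R·T` of the `A`-algebra `B`, for `R` a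
subalgebra of `B` and `T` a subalgebra of `A`. -/
def scalarConductor (R : Subalgebra F B) (T : Subalgebra F A) : Submodule F B where
  carrier := {w | ∀ a ∈ T, a • w ∈ R}
  add_mem' hw hw' a ha := by simpa only [smul_add] using R.add_mem (hw a ha) (hw' a ha)
  zero_mem' a _ := by simpa only [smul_zero] using R.zero_mem
  smul_mem' c w hw a ha := by simpa only [smul_comm a c w] using R.smul_mem (hw a ha) c

variable {R : Subalgebra F B} {T : Subalgebra F A} {w r : B}

lemma mem_scalarConductor : w ∈ scalarConductor R T ↔ ∀ a ∈ T, a • w ∈ R := Iff.rfl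

lemma mem_of_mem_scalarConductor (hw : w ∈ scalarConductor R T) : w ∈ R := by
  simpa only [one_smul] using mem_scalarConductor.mp hw 1 T.one_mem

lemma smul_mem_scalarConductor {t : A} (ht : t ∈ T) (hw : w ∈ scalarConductor R T) :
    t • w ∈ scalarConductor R T :=
  mem_scalarConductor.mpr fun a ha ↦ smul_smul a t w ▸ hw _ (T.mul_mem ha ht)

lemma mul_left_mem_scalarConductor (hr : r ∈ R) (hw : w ∈ scalarConductor R T) :
    r * w ∈ scalarConductor R T :=
  mem_scalarConductor.mpr fun a ha ↦ mul_smul_comm a r w ▸ R.mul_mem hr (hw a ha)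

lemma mul_right_mem_scalarConductor (hr : r ∈ R) (hw : w ∈ scalarConductor R T) :
    w * r ∈ scalarConductor R T :=
  mem_scalarConductor.mpr fun a ha ↦ smul_mul_assoc a w r ▸ R.mul_mem (hw a ha) hr

theorem mul_mem_scalarConductor_of_mem_adjoin
    (hr : r ∈ Algebra.adjoin F ((R : Set B) ∪ algebraMap A B '' T)) :
    ∀ w ∈ scalarConductor R T, r * w ∈ scalarConductor R T ∧ w * r ∈ scalarConductor R T := by
  induction hr using Algebra.adjoin_induction with
  | mem r hr =>
    intro w hw
    obtain hr | ⟨t, ht, rfl⟩ := hr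
    · exact ⟨mul_left_mem_scalarConductor hr hw, mul_right_mem_scalarConductor hr hw⟩
    · rw [← Algebra.commutes t w, ← Algebra.smul_def, and_self]
      exact smul_mem_scalarConductor ht hw
  | algebraMap c =>
    intro w hw
    rw [← Algebra.commutes c w, ← Algebra.smul_def, and_self]
    exact Submodule.smul_mem _ c hw
  | add r s _ _ hr hs =>
    intro w hw
    rw [add_mul, mul_add]
    exact ⟨add_mem (hr w hw).1 (hs w hw).1, add_mem (hr w hw).2 (hs w hw).2⟩
  | mul r s _ _ hr hs =>
    intro w hw
    rw [mul_assoc, ← mul_assoc w]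
    exact ⟨(hr _ (hs w hw).1).1, (hs _ (hr w hw).2).2⟩

variable {κ : Type*} [Fintype κ] [DecidableEq κ]

theorem alternatingMap_apply_mem_scalarConductor (b : Module.Basis κ A B)
    (hT : T ≤ multiplierRing (detSpan b R.toSubmodule)) {f : B [⋀^κ]→ₗ[A] B}
    (hf : ∀ v : κ → B, (∀ k, v k ∈ R) → f v ∈ R) {v : κ → B} (hv : ∀ k, v k ∈ R) :
    f v ∈ scalarConductor R T := by
  have detSpan_smul_mem : detSpan b R.toSubmodule ≤
      R.toSubmodule.comap ((LinearMap.toSpanSingleton A B (f b)).restrictScalars F) := by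
    refine Submodule.span_le.mpr ?_
    rintro _ ⟨u, hu, rfl⟩
    simpa [← alternatingMap_apply_eq_det_smul] using hf u hu
  refine mem_scalarConductor.mpr fun a ha ↦ ?_
  rw [alternatingMap_apply_eq_det_smul b f v, smul_smul]
  exact detSpan_smul_mem (mem_multiplierRing.mp (hT ha) _ (det_mem_detSpan b hv))

end Conductor

section Capelli

open Matrix Module

variable {A B : Type*} [CommRing A] [Ring B] [Algebra A B] {N : ℕ}

variable (A) in
/-- The Capelli map `x ↦ ∑ σ, sign σ • ∏ k, y k * x (σ k) * y' k`, alternating in `x`. -/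
noncomputable def capelli (y y' : Fin N → B) : B [⋀^Fin N]→ₗ[A] B :=
  ((MultilinearMap.mkPiAlgebraFin A N B).compLinearMap fun k ↦
    LinearMap.mulLeft A (y k) ∘ₗ LinearMap.mulRight A (y' k)).alternatization

lemma capelli_apply (y y' x : Fin N → B) :
    capelli A y y' x = ∑ σ : Equiv.Perm (Fin N),
      (σ.sign : ℤ) • (List.ofFn fun k ↦ y k * x (σ k) * y' k).prod := by
  simp [capelli, MultilinearMap.alternatization_apply, Units.smul_def, mul_assoc]

lemma capelli_mem {S : Type*} [SetLike S B] [SubringClass S B] {R : S} {y y' x : Fin N → B}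
    (hy : ∀ k, y k ∈ R) (hy' : ∀ k, y' k ∈ R) (hx : ∀ k, x k ∈ R) : capelli A y y' x ∈ R := by
  rw [capelli_apply]
  refine sum_mem fun σ _ ↦ zsmul_mem (list_prod_mem fun z hz ↦ ?_) _
  obtain ⟨k, rfl⟩ := List.mem_ofFn.mp hz
  exact mul_mem (mul_mem (hy k) (hx _)) (hy' k)

lemma map_capelli (A' : Type*) {B' G : Type*} [CommRing A'] [Ring B'] [Algebra A' B']
    [FunLike G B B'] [RingHomClass G B B'] (ψ : G) (y y' x : Fin N → B) :
    ψ (capelli A y y' x) = capelli A' (ψ ∘ y) (ψ ∘ y') (ψ ∘ x) := by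
  simp [capelli_apply, map_sum, map_list_prod, List.map_ofFn, Function.comp_def]

variable {ι : Type*} [Fintype ι] [DecidableEq ι]

lemma prod_ofFn_single_apply (i : ι) (c : Fin N → A) :
    (List.ofFn fun k ↦ single i i (c k)).prod i i = ∏ k, c k := by
  induction N with
  | zero => simp
  | succ N ih => rw [List.ofFn_succ, List.prod_cons, single_mul_apply_same, ih, Fin.prod_univ_succ]

theorem capelli_single_apply (e : Fin N ≃ ι × ι) (i : ι) (x : Fin N → Matrix ι ι A) :
    capelli A (fun k ↦ single i (e k).1 1) (fun k ↦ single (e k).2 i 1) x i i =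
      ((stdBasis A ι ι).reindex e.symm).det x := by
  simp only [capelli_apply, single_mul_mul_single, one_mul, mul_one, Matrix.sum_apply,
    Matrix.smul_apply, prod_ofFn_single_apply]
  rw [Basis.det_apply, ← det_transpose, det_apply]
  simp [Basis.toMatrix, stdBasis_repr_apply, Units.smul_def]

end Capelli

theorem scalarConductor_ne_bot {F A K ι : Type*} [CommRing F] [CommRing A] [Algebra F A]
    [CommRing K] [Algebra F K] [Nontrivial K] [Fintype ι] [DecidableEq ι] [Nonempty ι] {N : ℕ}
    (e : Fin N ≃ ι × ι) {R : Subalgebra F (Matrix ι ι A)} {T : Subalgebra F A}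
    (hT : T ≤ multiplierRing
      (detSpan ((Matrix.stdBasis A ι ι).reindex e.symm) R.toSubmodule))
    (φ : A →ₐ[F] K) (hφ : R.map φ.mapMatrix = ⊤) : scalarConductor R T ≠ ⊥ := by
  have lift (z : Fin N → Matrix ι ι K) :
      ∃ w : Fin N → Matrix ι ι A, (∀ k, w k ∈ R) ∧ ⇑φ.mapMatrix ∘ w = z := by
    have (k : Fin N) : z k ∈ R.map φ.mapMatrix := hφ ▸ Algebra.mem_top
    choose w hwR hw using this
    exact ⟨w, hwR, funext hw⟩
  obtain ⟨i⟩ := ‹Nonempty ι›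
  let b := (Matrix.stdBasis K ι ι).reindex e.symm
  obtain ⟨y, hyR, hy⟩ := lift fun k ↦ Matrix.single i (e k).1 1
  obtain ⟨y', hyR', hy'⟩ := lift fun k ↦ Matrix.single (e k).2 i 1
  obtain ⟨x, hxR, hx⟩ := lift b
  refine (Submodule.ne_bot_iff _).mpr ⟨capelli A y y' x, alternatingMap_apply_mem_scalarConductor
    _ hT (fun v hv ↦ capelli_mem hyR hyR' hv) hxR, fun h ↦ one_ne_zero (α := K) ?_⟩
  calc (1 : K) = capelli K (fun k ↦ Matrix.single i (e k).1 1)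
          (fun k ↦ Matrix.single (e k).2 i 1) b i i := by rw [capelli_single_apply, b.det_self]
    _ = φ.mapMatrix (capelli A y y' x) i i := by rw [map_capelli K, hy, hy', hx]
    _ = 0 := by rw [h, map_zero, Matrix.zero_apply]

section Generation

open Matrix

theorem adjoin_permMatrix_single_eq_top {F ι : Type*} [CommSemiring F] [Fintype ι] [DecidableEq ι]
    {σ : Equiv.Perm ι} (hσ : ∀ i j, ∃ k : ℕ, (σ ^ k) i = j) (i₀ : ι) :
    Algebra.adjoin F {σ.permMatrix F, single i₀ i₀ (1 : F)} = ⊤ := by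
  set S := Algebra.adjoin F {σ.permMatrix F, single i₀ i₀ (1 : F)}
  have permMatrix_mem (k : ℕ) : (σ ^ k).permMatrix F ∈ S := by
    induction k with
    | zero => simpa only [pow_zero, permMatrix_one] using S.one_mem
    | succ k ih =>
      rw [pow_succ, permMatrix_mul]
      exact mul_mem (Algebra.subset_adjoin (Set.mem_insert _ _)) ih
  have single_mem (i j : ι) : single i j (1 : F) ∈ S := by
    obtain ⟨k, hk⟩ := hσ i i₀
    obtain ⟨l, hl⟩ := hσ i₀ j
    have : single i j (1 : F) =
        (σ ^ k).permMatrix F * single i₀ i₀ 1 * (σ ^ l).permMatrix F := by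
      rw [PEquiv.toMatrix_toPEquiv_mul, PEquiv.mul_toMatrix_toPEquiv]
      ext a b
      simp [single_apply, ← hk, ← hl, Equiv.eq_symm_apply]
    rw [this]
    exact mul_mem (mul_mem (permMatrix_mem k) (Algebra.subset_adjoin (by simp))) (permMatrix_mem l)
  refine eq_top_iff.mpr fun w _ ↦ ?_
  rw [matrix_eq_sum_single w]
  refine sum_mem fun i _ ↦ sum_mem fun j _ ↦ ?_
  simpa [smul_single] using S.smul_mem (single_mem i j) (w i j)

open Fin.CommRing in
lemma exists_addRight_one_pow_apply_eq {n : ℕ} [NeZero n] (i j : Fin n) :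
    ∃ k : ℕ, (Equiv.addRight (1 : Fin n) ^ k) i = j :=
  ⟨(j - i).val, by simp⟩

end Generation

section GenericMatrix

variable {F : Type} [Field F] {n m : ℕ}

lemma map_genericMatrixAlgebra {K : Type*} [CommRing K] [Algebra F K]
    (Y : Fin m → Matrix (Fin n) (Fin n) K) :
    (genericMatrixAlgebra F n m).map
      (MvPolynomial.aeval fun p : Fin m × Fin n × Fin n ↦ Y p.1 p.2.1 p.2.2).mapMatrix =
      Algebra.adjoin F (Set.range Y) := by
  rw [genericMatrixAlgebra, AlgHom.map_adjoin, ← Set.range_comp]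
  congr 2
  ext l i j
  simp [genericMatrix]

lemma exists_map_genericMatrixAlgebra_eq_top [NeZero n] (hm : 2 ≤ m) :
    ∃ φ : MvPolynomial (Fin m × Fin n × Fin n) F →ₐ[F] F,
      (genericMatrixAlgebra F n m).map φ.mapMatrix = ⊤ := by
  let σ : Equiv.Perm (Fin n) := Equiv.addRight 1
  let Y : Fin m → Matrix (Fin n) (Fin n) F := fun l ↦
    if l = ⟨0, by lia⟩ then σ.permMatrix F else Matrix.single 0 0 1
  refine ⟨_, (map_genericMatrixAlgebra Y).trans (top_le_iff.mp ?_)⟩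
  rw [← adjoin_permMatrix_single_eq_top (σ := σ) exists_addRight_one_pow_apply_eq 0]
  refine Algebra.adjoin_mono (Set.pair_subset ⟨⟨0, by lia⟩, ?_⟩ ⟨⟨1, by lia⟩, ?_⟩)
  · simp [Y]
  · simp [Y]

lemma genericTraceRing_le_multiplierRing (hn : (n : F) ≠ 0) {κ : Type*} [Fintype κ] [DecidableEq κ]
    (b : Module.Basis κ (MvPolynomial (Fin m × Fin n × Fin n) F)
      (Matrix (Fin n) (Fin n) (MvPolynomial (Fin m × Fin n × Fin n) F))) :
    genericTraceRing F n m ≤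
      multiplierRing (detSpan b (genericMatrixAlgebra F n m).toSubmodule) := by
  refine Algebra.adjoin_le ?_
  rintro _ ⟨u, hu, k, rfl⟩
  exact coeff_charpoly_mem_multiplierRing_of_mem (by simpa using hn) b hu k

lemma scalarConductor_genericMatrixAlgebra_ne_bot (hn : (n : F) ≠ 0) (hm : 2 ≤ m) :
    scalarConductor (genericMatrixAlgebra F n m) (genericTraceRing F n m) ≠ ⊥ := by
  have : NeZero n := ⟨by rintro rfl; simp at hn⟩
  obtain ⟨φ, hφ⟩ := exists_map_genericMatrixAlgebra_eq_top (F := F) (n := n) hm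
  exact scalarConductor_ne_bot (Fintype.equivFin _).symm
    (genericTraceRing_le_multiplierRing hn _) φ hφ

end GenericMatrix

theorem razmyslov_conductor_general (F : Type) [Field F]
    (n m : ℕ) (hn : (n : F) ≠ 0) (hm : 2 ≤ m) :
    ∃ I : AddSubgroup (Matrix (Fin n) (Fin n) (MvPolynomial (Fin m × Fin n × Fin n) F)),
      I ≠ ⊥ ∧
      (↑I : Set (Matrix (Fin n) (Fin n) (MvPolynomial (Fin m × Fin n × Fin n) F))) ⊆
        genericMatrixAlgebra F n m ∧
      (∀ x ∈ I, ∀ r ∈ genericMatrixAlgebra F n m, r * x ∈ I ∧ x * r ∈ I) ∧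
      (∀ x ∈ I, ∀ r ∈ genericTraceMatrixAlgebra F n m, r * x ∈ I ∧ x * r ∈ I) := by
  let J := scalarConductor (genericMatrixAlgebra F n m) (genericTraceRing F n m)
  refine ⟨J.toAddSubgroup, ?_, fun _ ↦ mem_of_mem_scalarConductor,
    fun x hx r hr ↦ ⟨mul_left_mem_scalarConductor hr hx, mul_right_mem_scalarConductor hr hx⟩,
    fun x hx r hr ↦ mul_mem_scalarConductor_of_mem_adjoin hr x hx⟩
  exact fun h ↦ scalarConductor_genericMatrixAlgebra_ne_bot hn hm
    (Submodule.toAddSubgroup_injective h)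

/-- **Razmyslov's conductor theorem.** For `char F = 0` and `n, m ≥ 2` the inclusion
`R_{n,m} ⊆ R_{n,m}·T_{n,m}` has a nonzero conductor: there is a nonzero additive subgroup
`I` contained in `R_{n,m}` that is simultaneously a two-sided ideal of `R_{n,m}` and a
two-sided ideal of `R_{n,m}·T_{n,m}`. -/
theorem razmyslov_conductor (F : Type) [Field F] [CharZero F]
    (n m : ℕ) (hn : 2 ≤ n) (hm : 2 ≤ m) :
    ∃ I : AddSubgroup (Matrix (Fin n) (Fin n) (MvPolynomial (Fin m × Fin n × Fin n) F)),
      I ≠ ⊥ ∧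
      (↑I : Set (Matrix (Fin n) (Fin n) (MvPolynomial (Fin m × Fin n × Fin n) F))) ⊆
        genericMatrixAlgebra F n m ∧
      (∀ x ∈ I, ∀ r ∈ genericMatrixAlgebra F n m, r * x ∈ I ∧ x * r ∈ I) ∧
      (∀ x ∈ I, ∀ r ∈ genericTraceMatrixAlgebra F n m, r * x ∈ I ∧ x * r ∈ I) :=
  razmyslov_conductor_general F n m (Nat.cast_ne_zero.mpr (by lia)) hm
end

section
/- Let F be a field of characteristic 0, let i_1, …, i_m ≥ 1 and let N = i_1 + ⋯ + i_m. Let UT(i_1, …, i_m) ⊆ M_N(F) be the algebra of block upper triangular matrices with diagonal blocks of sizes i_1, …, i_m. Then the T-ideal of polynomial identities of UT(i_1, …, i_m) equals the product Γ_{i_1} Γ_{i_2} ⋯ Γ_{i_m} of the T-ideals of identities of the matrix algebras M_{i_1}(F), …, M_{i_m}(F), the product being taken as two-sided ideals of the free algebra F⟨x_1, x_2, …⟩. (Theorem of Giambruno–Zaicev.) -/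
/-!
The inclusion of the product in the identities of the block triangular algebra is the vanishing of
`[[0, *], [0, *]] * [[*, *], [0, 0]]`. For the converse with two blocks, write `A` for the free
algebra and `I`, `J` for the identities of the two diagonal blocks, and evaluate an identity `f` at
matrices `[[a, e], [0, b]]`. If `e` is nonzero only at the variable `xₖ`, the corner of the value
is the image of the free difference quotient `∂ₖ f ∈ A ⊗ A` under `x ⊗ y ↦ a(x) e b(y)`, so `∂ₖ f`
lies in `I ⊗ A + A ⊗ J`. The telescoping identity
`f ⊗ 1 - 1 ⊗ f = ∑ₖ (∂ₖ f · (xₖ ⊗ 1) - (1 ⊗ xₖ) · ∂ₖ f)` then exhibits the left-hand side as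
`u + v` with `u ∈ I ⊗ A` killed by multiplication and `v ∈ A ⊗ J`. Hence `f ⊗ 1 - u = 1 ⊗ f + v`
lies in `(I ⊗ A) ∩ (A ⊗ J) = I ⊗ J`, and multiplication sends it to `f`, which is therefore in
`I * J`. More blocks are peeled off one at a time.
-/

/-- The set of polynomial identities of the subset `U` of the `F`-algebra `S` — those
elements of the free associative algebra on countably many noncommuting variables all of
whose evaluations at elements of `U` vanish — viewed as an `F`-submodule of the free
algebra.  (When `U` is a (sub)algebra this is its T-ideal of identities; products below are
taken as two-sided ideals, i.e. additive spans of products.) -/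
def identityIdeal (F : Type) [Field F] (S : Type) [Ring S] [Algebra F S] (U : Set S) :
    Submodule F (FreeAlgebra F ℕ) where
  carrier := {f | ∀ a : ℕ → S, (∀ k, a k ∈ U) → (FreeAlgebra.lift F a) f = 0}
  add_mem' := by
    intro f g hf hg a ha
    rw [map_add, hf a ha, hg a ha, add_zero]
  zero_mem' := by
    intro a ha
    rw [map_zero]
  smul_mem' := by
    intro c f hf a ha
    rw [map_smul, hf a ha, smul_zero]

open TensorProduct LinearMap

section Tensor

theorem equivFinsuppOfBasisRight_rTensor_apply {R M M' N κ : Type*} [CommSemiring R]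
    [AddCommMonoid M] [Module R M] [AddCommMonoid M'] [Module R M'] [AddCommMonoid N] [Module R N]
    [DecidableEq κ] (b : Module.Basis κ R N) (g : M →ₗ[R] M') (t : M ⊗[R] N) (j : κ) :
    equivFinsuppOfBasisRight b (rTensor N g t) j = g (equivFinsuppOfBasisRight b t j) := by
  induction t using TensorProduct.induction_on with
  | zero => simp
  | tmul x y => simp
  | add x y hx hy => simp only [map_add, Finsupp.add_apply, hx, hy]

variable {R V W : Type*} [CommRing R] [AddCommGroup V] [Module R V] [AddCommGroup W] [Module R W]

theorem rTensor_mkQ_eq_zero_of_iInf_ker_le [Module.Free R W] {κ V' : Type*} [AddCommGroup V']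
    [Module R V'] {I : Submodule R V} {φ : κ → V →ₗ[R] V'} (hI : ⨅ i, ker (φ i) ≤ I)
    {t : V ⊗[R] W} (ht : ∀ i, rTensor W (φ i) t = 0) : rTensor W I.mkQ t = 0 := by
  classical
  let b := Module.Free.chooseBasis R W
  refine (equivFinsuppOfBasisRight b).injective (Finsupp.ext fun j => ?_)
  have coord_mem : equivFinsuppOfBasisRight b t j ∈ I :=
    hI <| (Submodule.mem_iInf _).2 fun i => by
      rw [mem_ker, ← equivFinsuppOfBasisRight_rTensor_apply, ht, map_zero, Finsupp.zero_apply]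
  rw [equivFinsuppOfBasisRight_rTensor_apply, map_zero, Finsupp.zero_apply]
  simpa using coord_mem

theorem lTensor_mkQ_eq_zero_of_iInf_ker_le [Module.Free R V] {κ W' : Type*} [AddCommGroup W']
    [Module R W'] {J : Submodule R W} {ψ : κ → W →ₗ[R] W'} (hJ : ⨅ i, ker (ψ i) ≤ J)
    {t : V ⊗[R] W} (ht : ∀ i, lTensor V (ψ i) t = 0) : lTensor V J.mkQ t = 0 := by
  apply (TensorProduct.comm R V _).injective
  rw [map_zero, ← rTensor_comm]
  refine rTensor_mkQ_eq_zero_of_iInf_ker_le hJ fun i => ?_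
  rw [rTensor_comm, ht, map_zero]

theorem map_mkQ_mkQ_eq_zero_of_iInf_ker_le {κ κ' V' W' : Type*} [AddCommGroup V'] [Module R V']
    [Module.Free R V'] [AddCommGroup W'] [Module R W'] {I : Submodule R V} {J : Submodule R W}
    [Module.Free R (W ⧸ J)] {φ : κ → V →ₗ[R] V'} {ψ : κ' → W →ₗ[R] W'}
    (hI : ⨅ i, ker (φ i) ≤ I) (hJ : ⨅ i, ker (ψ i) ≤ J) {t : V ⊗[R] W}
    (ht : ∀ i j, map (φ i) (ψ j) t = 0) :
    map I.mkQ J.mkQ t = 0 := by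
  rw [← rTensor_comp_lTensor, comp_apply]
  refine rTensor_mkQ_eq_zero_of_iInf_ker_le hI fun i => ?_
  rw [← comp_apply, rTensor_comp_lTensor, ← lTensor_comp_rTensor, comp_apply]
  refine lTensor_mkQ_eq_zero_of_iInf_ker_le hJ fun j => ?_
  rw [← comp_apply, lTensor_comp_rTensor, ht]

theorem ker_map_mkQ_mkQ (I : Submodule R V) (J : Submodule R W) :
    ker (map I.mkQ J.mkQ) = range (rTensor W I.subtype) ⊔ range (lTensor V J.subtype) := by
  rw [sup_comm]
  exact TensorProduct.map_ker (exact_subtype_mkQ I) I.mkQ_surjective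
    (exact_subtype_mkQ J) J.mkQ_surjective

theorem range_rTensor_subtype_inf_range_lTensor_subtype (I : Submodule R V) (J : Submodule R W)
    [Module.Flat R (W ⧸ J)] :
    range (rTensor W I.subtype) ⊓ range (lTensor V J.subtype) =
      range (map I.subtype J.subtype) := by
  apply le_antisymm
  · rintro _ ⟨⟨s, rfl⟩, hs⟩
    replace hs := (lTensor_exact V (exact_subtype_mkQ J) J.mkQ_surjective _).2 hs
    rw [← comp_apply, lTensor_comp_rTensor, ← rTensor_comp_lTensor, comp_apply] at hs
    have hs : lTensor I J.mkQ s = 0 :=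
      Module.Flat.rTensor_preserves_injective_linearMap _ I.injective_subtype (by simpa using hs)
    obtain ⟨r, rfl⟩ := (lTensor_exact I (exact_subtype_mkQ J) J.mkQ_surjective s).1 hs
    exact ⟨r, by rw [← comp_apply, rTensor_comp_lTensor]⟩
  · rintro _ ⟨r, rfl⟩
    exact ⟨⟨lTensor I J.subtype r, by rw [← comp_apply, rTensor_comp_lTensor]⟩,
      ⟨rTensor J I.subtype r, by rw [← comp_apply, lTensor_comp_rTensor]⟩⟩

end Tensor

section MiddleCommutator

variable {R A : Type*} [CommRing R] [Ring A] [Algebra R A]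

/-- The map `a ⊗ b ↦ a x ⊗ b - a ⊗ x b` measuring the failure of `A ⊗[R] A` to be balanced with
respect to `x`; it is the Koszul differential by which free difference quotients telescope. -/
noncomputable def middleCommutator (R : Type*) {A : Type*} [CommRing R] [Ring A] [Algebra R A]
    (x : A) : A ⊗[R] A →ₗ[R] A ⊗[R] A :=
  mulRight R (x ⊗ₜ[R] 1) - mulLeft R (1 ⊗ₜ[R] x)

theorem middleCommutator_apply (x : A) (t : A ⊗[R] A) :
    middleCommutator R x t = t * (x ⊗ₜ[R] 1) - (1 ⊗ₜ[R] x) * t := rfl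

theorem middleCommutator_tmul (x a b : A) :
    middleCommutator R x (a ⊗ₜ b) = (a * x) ⊗ₜ b - a ⊗ₜ (x * b) := by
  simp [middleCommutator_apply]

theorem middleCommutator_tmul_one_mul (x a : A) (t : A ⊗[R] A) :
    middleCommutator R x ((a ⊗ₜ[R] 1) * t) = (a ⊗ₜ[R] 1) * middleCommutator R x t := by
  simp [middleCommutator_apply, mul_sub, ← mul_assoc]

theorem middleCommutator_mul_one_tmul (x b : A) (t : A ⊗[R] A) :
    middleCommutator R x (t * (1 ⊗ₜ[R] b)) = middleCommutator R x t * (1 ⊗ₜ[R] b) := by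
  simp [middleCommutator_apply, sub_mul, mul_assoc]

theorem mul'_middleCommutator (x : A) (t : A ⊗[R] A) : mul' R A (middleCommutator R x t) = 0 := by
  induction t using TensorProduct.induction_on with
  | zero => simp
  | tmul a b => simp [middleCommutator_tmul, mul_assoc]
  | add s t hs ht => rw [map_add, map_add, hs, ht, add_zero]

theorem middleCommutator_mem_range_rTensor {I : Submodule R A} (hI : I * ⊤ ≤ I) (x : A)
    {t : A ⊗[R] A} (ht : t ∈ range (rTensor A I.subtype)) :
    middleCommutator R x t ∈ range (rTensor A I.subtype) := by
  obtain ⟨s, rfl⟩ := ht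
  induction s using TensorProduct.induction_on with
  | zero => simp
  | tmul a b =>
    rw [rTensor_tmul, middleCommutator_tmul]
    exact sub_mem ⟨⟨a * x, hI (Submodule.mul_mem_mul a.2 trivial)⟩ ⊗ₜ b, rfl⟩
      ⟨a ⊗ₜ (x * b), rfl⟩
  | add s s' hs hs' => simpa only [map_add] using add_mem hs hs'

theorem middleCommutator_mem_range_lTensor {J : Submodule R A} (hJ : ⊤ * J ≤ J) (x : A)
    {t : A ⊗[R] A} (ht : t ∈ range (lTensor A J.subtype)) :
    middleCommutator R x t ∈ range (lTensor A J.subtype) := by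
  obtain ⟨s, rfl⟩ := ht
  induction s using TensorProduct.induction_on with
  | zero => simp
  | tmul a b =>
    rw [lTensor_tmul, middleCommutator_tmul]
    exact sub_mem ⟨(a * x) ⊗ₜ b, rfl⟩
      ⟨a ⊗ₜ ⟨x * b, hJ (Submodule.mul_mem_mul trivial b.2)⟩, rfl⟩
  | add s s' hs hs' => simpa only [map_add] using add_mem hs hs'

end MiddleCommutator

section FreeDiffQuot

variable {R X : Type*} [CommRing R] [DecidableEq X]

/-- The upper triangular representation of the free algebra on `X` over `A ⊗[R] A` whose diagonal
entries are `f ⊗ 1` and `1 ⊗ f` and whose corner is the free difference quotient. -/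
noncomputable def freeDiffQuotRep (R : Type*) {X : Type*} [CommRing R] [DecidableEq X] (k : X) :
    FreeAlgebra R X →ₐ[R] Matrix (Fin 2) (Fin 2) (FreeAlgebra R X ⊗[R] FreeAlgebra R X) :=
  FreeAlgebra.lift R fun l =>
    !![FreeAlgebra.ι R l ⊗ₜ 1, if l = k then 1 else 0; 0, 1 ⊗ₜ FreeAlgebra.ι R l]

/-- The free difference quotient `∂ₖ : A → A ⊗[R] A` of the free algebra `A` on `X`, that is the
derivation with `∂ₖ xₗ = δₖₗ (1 ⊗ 1)`; on a monomial it sums `u ⊗ v` over its factorizations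
`u xₖ v`. -/
noncomputable def freeDiffQuot (R : Type*) {X : Type*} [CommRing R] [DecidableEq X] (k : X) :
    FreeAlgebra R X →ₗ[R] FreeAlgebra R X ⊗[R] FreeAlgebra R X :=
  Matrix.entryLinearMap R _ 0 1 ∘ₗ (freeDiffQuotRep R k).toLinearMap

theorem freeDiffQuotRep_apply (k : X) (f : FreeAlgebra R X) :
    freeDiffQuotRep R k f = !![f ⊗ₜ 1, freeDiffQuot R k f; 0, 1 ⊗ₜ f] := by
  suffices freeDiffQuotRep R k f 0 0 = f ⊗ₜ 1 ∧ freeDiffQuotRep R k f 1 0 = 0 ∧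
      freeDiffQuotRep R k f 1 1 = 1 ⊗ₜ f by
    obtain ⟨h00, h10, h11⟩ := this
    ext i j : 2
    fin_cases i <;> fin_cases j <;> simp [h00, h10, h11, freeDiffQuot]
  induction f using FreeAlgebra.induction with
  | grade0 r =>
    simp [AlgHom.commutes, Matrix.algebraMap_matrix_apply,
      Algebra.TensorProduct.algebraMap_apply, ← Algebra.TensorProduct.algebraMap_apply']
  | grade1 l => simp [freeDiffQuotRep]
  | mul f g hf hg => simp [Matrix.mul_apply, hf, hg]
  | add f g hf hg => simp [hf, hg, add_tmul, tmul_add]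

theorem freeDiffQuot_algebraMap (k : X) (r : R) :
    freeDiffQuot R k (algebraMap R _ r) = 0 := by
  simp [freeDiffQuot, Matrix.algebraMap_matrix_apply]

theorem freeDiffQuot_ι (k l : X) :
    freeDiffQuot R k (FreeAlgebra.ι R l) = if l = k then 1 else 0 := by
  simp [freeDiffQuot, freeDiffQuotRep]

theorem freeDiffQuot_mul (k : X) (f g : FreeAlgebra R X) :
    freeDiffQuot R k (f * g) =
      (f ⊗ₜ 1) * freeDiffQuot R k g + freeDiffQuot R k f * (1 ⊗ₜ g) := by
  have h := congr($(map_mul (freeDiffQuotRep R k) f g) 0 1)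
  simpa [freeDiffQuotRep_apply, Matrix.mul_apply] using h

theorem eventually_sum_middleCommutator_freeDiffQuot (f : FreeAlgebra R X) :
    ∀ᶠ s : Finset X in Filter.atTop,
      ∑ k ∈ s, middleCommutator R (FreeAlgebra.ι R k) (freeDiffQuot R k f) =
        f ⊗ₜ 1 - 1 ⊗ₜ f := by
  induction f using FreeAlgebra.induction with
  | grade0 r =>
    refine Filter.Eventually.of_forall fun s => ?_
    simp [freeDiffQuot_algebraMap, Algebra.TensorProduct.algebraMap_apply,
      ← Algebra.TensorProduct.algebraMap_apply']
  | grade1 l =>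
    filter_upwards [Filter.eventually_ge_atTop {l}] with s hs
    rw [Finset.sum_eq_single_of_mem l (Finset.singleton_subset_iff.1 hs)]
    · simp [freeDiffQuot_ι, middleCommutator_apply]
    · intro k _ hk
      simp [freeDiffQuot_ι, hk.symm]
  | mul f g hf hg =>
    filter_upwards [hf, hg] with s hf hg
    simp only [freeDiffQuot_mul, map_add, middleCommutator_tmul_one_mul,
      middleCommutator_mul_one_tmul, Finset.sum_add_distrib, ← Finset.mul_sum, ← Finset.sum_mul,
      hf, hg]
    simp [mul_sub, sub_mul]
  | add f g hf hg =>
    filter_upwards [hf, hg] with s hf hg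
    simp only [map_add, Finset.sum_add_distrib, hf, hg, add_tmul, tmul_add]
    abel

end FreeDiffQuot

section Lewin

variable {R : Type*} [CommRing R]

theorem mem_mul_of_tmul_one_sub_one_tmul_mem {A : Type*} [Ring A] [Algebra R A]
    {I J : Submodule R A} [Module.Flat R (A ⧸ J)] {f : A} (hfI : f ∈ I) (hfJ : f ∈ J)
    (h : f ⊗ₜ[R] 1 - 1 ⊗ₜ[R] f ∈
      (range (rTensor A I.subtype) ⊓ ker (mul' R A)) ⊔ range (lTensor A J.subtype)) :
    f ∈ I * J := by
  obtain ⟨u, ⟨huI, hu⟩, v, hv, huv⟩ := Submodule.mem_sup.1 h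
  have hw : f ⊗ₜ[R] 1 - u ∈ range (map I.subtype J.subtype) := by
    rw [← range_rTensor_subtype_inf_range_lTensor_subtype]
    refine ⟨sub_mem ⟨⟨f, hfI⟩ ⊗ₜ 1, rfl⟩ huI, ?_⟩
    have split_other : f ⊗ₜ[R] 1 - u = 1 ⊗ₜ[R] f + v := by
      rw [sub_eq_iff_eq_add, add_assoc, add_comm v, huv, add_sub_cancel]
    rw [split_other]
    exact add_mem ⟨1 ⊗ₜ ⟨f, hfJ⟩, rfl⟩ hv
  have mul'_w : mul' R A (f ⊗ₜ[R] 1 - u) = f := by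
    rw [map_sub, mem_ker.1 hu, mul'_apply, mul_one, sub_zero]
  obtain ⟨r, hr⟩ := hw
  rw [← mul'_w, ← hr, ← Submodule.mulMap_range]
  exact ⟨r, by rw [← comp_apply]; congr 1; ext; rfl⟩

variable {X : Type*} [DecidableEq X]

theorem mem_mul_of_map_mkQ_freeDiffQuot_eq_zero {I J : Submodule R (FreeAlgebra R X)}
    [Module.Flat R (FreeAlgebra R X ⧸ J)] (hI : I * ⊤ ≤ I) (hJ : ⊤ * J ≤ J)
    {f : FreeAlgebra R X} (hfI : f ∈ I) (hfJ : f ∈ J)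
    (h : ∀ k, map I.mkQ J.mkQ (freeDiffQuot R k f) = 0) : f ∈ I * J := by
  apply mem_mul_of_tmul_one_sub_one_tmul_mem hfI hfJ
  obtain ⟨s, hs⟩ := (eventually_sum_middleCommutator_freeDiffQuot f).exists
  rw [← hs]
  refine sum_mem fun k _ => ?_
  have hk := mem_ker.2 (h k)
  rw [ker_map_mkQ_mkQ] at hk
  obtain ⟨u, hu, v, hv, huv⟩ := Submodule.mem_sup.1 hk
  rw [← huv, map_add]
  exact Submodule.add_mem_sup
    ⟨middleCommutator_mem_range_rTensor hI _ hu, mul'_middleCommutator _ u⟩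
    (middleCommutator_mem_range_lTensor hJ _ hv)

end Lewin

section BlockEvaluation

variable {R P Q : Type*} [CommRing R] [Fintype P] [DecidableEq P] [Fintype Q] [DecidableEq Q]

/-- The linear map `x ⊗ y ↦ α x * E * β y`, describing the contribution of `E` to the corner
of an evaluation at block triangular matrices. -/
noncomputable def sandwich {A : Type*} [Ring A] [Algebra R A] (α : A →ₐ[R] Matrix P P R)
    (β : A →ₐ[R] Matrix Q Q R) (E : Matrix P Q R) : A ⊗[R] A →ₗ[R] Matrix P Q R :=
  TensorProduct.lift <| LinearMap.mk₂ R (fun x y => α x * E * β y)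
    (by simp [Matrix.add_mul]) (by simp) (by simp [Matrix.mul_add]) (by simp)

section Sandwich

variable {A : Type*} [Ring A] [Algebra R A] (α : A →ₐ[R] Matrix P P R) (β : A →ₐ[R] Matrix Q Q R)

theorem sandwich_tmul (E : Matrix P Q R) (x y : A) :
    sandwich α β E (x ⊗ₜ y) = α x * E * β y := rfl

theorem sandwich_tmul_one_mul (E : Matrix P Q R) (x : A) (t : A ⊗[R] A) :
    sandwich α β E ((x ⊗ₜ 1) * t) = α x * sandwich α β E t := by
  induction t using TensorProduct.induction_on with
  | zero => simp
  | tmul a b => simp [sandwich_tmul, Matrix.mul_assoc]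
  | add s t hs ht => simp only [mul_add, map_add, hs, ht, Matrix.mul_add]

theorem sandwich_mul_one_tmul (E : Matrix P Q R) (y : A) (t : A ⊗[R] A) :
    sandwich α β E (t * (1 ⊗ₜ y)) = sandwich α β E t * β y := by
  induction t using TensorProduct.induction_on with
  | zero => simp
  | tmul a b => simp [sandwich_tmul, Matrix.mul_assoc]
  | add s t hs ht => simp only [add_mul, map_add, hs, ht, Matrix.add_mul]

theorem sandwich_single_apply (p s : P) (r q : Q) (t : A ⊗[R] A) :
    sandwich α β (Matrix.single s r 1) t p q =
      TensorProduct.lid R R (map (Matrix.entryLinearMap R R p s ∘ₗ α.toLinearMap)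
        (Matrix.entryLinearMap R R r q ∘ₗ β.toLinearMap) t) := by
  induction t using TensorProduct.induction_on with
  | zero => simp
  | tmul a b =>
    simp [sandwich_tmul, Matrix.mul_apply, Matrix.single_apply, ite_and]
  | add s t hs ht => simp only [map_add, Matrix.add_apply, hs, ht]

end Sandwich

variable {X : Type*}

theorem lift_fromBlocks_single [DecidableEq X] (a : X → Matrix P P R) (b : X → Matrix Q Q R)
    (k : X) (E : Matrix P Q R) (f : FreeAlgebra R X) :
    FreeAlgebra.lift R (fun l => Matrix.fromBlocks (a l) (if l = k then E else 0) 0 (b l)) f =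
      Matrix.fromBlocks (FreeAlgebra.lift R a f)
        (sandwich (FreeAlgebra.lift R a) (FreeAlgebra.lift R b) E (freeDiffQuot R k f)) 0
        (FreeAlgebra.lift R b f) := by
  induction f using FreeAlgebra.induction with
  | grade0 r =>
    rw [freeDiffQuot_algebraMap]
    simp [Algebra.algebraMap_eq_smul_one, ← Matrix.fromBlocks_one, Matrix.fromBlocks_smul]
  | grade1 l =>
    obtain rfl | hl := eq_or_ne l k
    · simp [freeDiffQuot_ι, Algebra.TensorProduct.one_def, sandwich_tmul]
    · simp [freeDiffQuot_ι, hl]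
  | mul f g hf hg =>
    simp [hf, hg, freeDiffQuot_mul, sandwich_tmul_one_mul, sandwich_mul_one_tmul,
      Matrix.fromBlocks_multiply]
  | add f g hf hg => simp [hf, hg, Matrix.fromBlocks_add]

theorem exists_lift_fromBlocks_zero₂₁ (a : X → Matrix P P R) (e : X → Matrix P Q R)
    (b : X → Matrix Q Q R) (f : FreeAlgebra R X) :
    ∃ D, FreeAlgebra.lift R (fun l => Matrix.fromBlocks (a l) (e l) 0 (b l)) f =
      Matrix.fromBlocks (FreeAlgebra.lift R a f) D 0 (FreeAlgebra.lift R b f) := by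
  induction f using FreeAlgebra.induction with
  | grade0 r =>
    refine ⟨0, ?_⟩
    simp [Algebra.algebraMap_eq_smul_one, ← Matrix.fromBlocks_one, Matrix.fromBlocks_smul]
  | grade1 l => exact ⟨e l, by simp⟩
  | mul f g hf hg =>
    obtain ⟨D, hD⟩ := hf
    obtain ⟨D', hD'⟩ := hg
    simp [hD, hD', Matrix.fromBlocks_multiply]
  | add f g hf hg =>
    obtain ⟨D, hD⟩ := hf
    obtain ⟨D', hD'⟩ := hg
    simp [hD, hD', Matrix.fromBlocks_add]

end BlockEvaluation

section IdentityIdeal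

variable {F : Type} [Field F]

section Ring

variable {S : Type} [Ring S] [Algebra F S]

theorem identityIdeal_mul_top (U : Set S) : identityIdeal F S U * ⊤ = identityIdeal F S U := by
  refine le_antisymm (Submodule.mul_le.2 fun f hf g _ a ha => ?_) fun f hf => ?_
  · rw [map_mul, hf a ha, zero_mul]
  · simpa using Submodule.mul_mem_mul hf (Submodule.mem_top (x := (1 : FreeAlgebra F ℕ)))

theorem top_mul_identityIdeal_le (U : Set S) :
    ⊤ * identityIdeal F S U ≤ identityIdeal F S U :=
  Submodule.mul_le.2 fun f _ g hg a ha => by rw [map_mul, hg a ha, mul_zero]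

theorem identityIdeal_eq_top_of_subsingleton [Subsingleton S] (U : Set S) :
    identityIdeal F S U = ⊤ :=
  eq_top_iff.2 fun _ _ _ _ => Subsingleton.elim _ _

theorem identityIdeal_preimage_algEquiv {T : Type} [Ring T] [Algebra F T] (e : S ≃ₐ[F] T)
    (V : Set T) : identityIdeal F S (e ⁻¹' V) = identityIdeal F T V := by
  have lift_comp (a : ℕ → S) (f : FreeAlgebra F ℕ) :
      FreeAlgebra.lift F (e ∘ a) f = e (FreeAlgebra.lift F a f) := by
    have h : FreeAlgebra.lift F (e ∘ a) = e.toAlgHom.comp (FreeAlgebra.lift F a) := by ext; simp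
    rw [h]; rfl
  ext f
  constructor <;> intro hf a ha
  · have h := hf (e.symm ∘ a) fun k => by simpa using ha k
    simpa [← lift_comp, Function.comp_def] using congrArg e h
  · simpa [lift_comp] using hf (e ∘ a) ha

end Ring

section TwoBlocks

/-- The block triangular matrices `[[a, *], [0, b]]` with `a ∈ V` and `b ∈ W`. -/
def twoBlockTriangular {P Q : Type} (V : Set (Matrix P P F)) (W : Set (Matrix Q Q F)) :
    Set (Matrix (P ⊕ Q) (P ⊕ Q) F) :=
  {x | x.toBlocks₁₁ ∈ V ∧ x.toBlocks₂₁ = 0 ∧ x.toBlocks₂₂ ∈ W}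

variable {P Q : Type} [Fintype P] [DecidableEq P] [Fintype Q] [DecidableEq Q]

theorem iInf_ker_entry_comp_lift_le_identityIdeal (V : Set (Matrix P P F)) :
    ⨅ i : (ℕ → V) × P × P, ker (Matrix.entryLinearMap F F i.2.1 i.2.2 ∘ₗ
      (FreeAlgebra.lift F fun k => (i.1 k : Matrix P P F)).toLinearMap) ≤
      identityIdeal F (Matrix P P F) V := by
  intro f hf a ha
  ext p q
  exact (Submodule.mem_iInf _).1 hf (fun k => ⟨a k, ha k⟩, p, q)

variable {V : Set (Matrix P P F)} {W : Set (Matrix Q Q F)}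

theorem identityIdeal_mul_identityIdeal_le_twoBlockTriangular :
    identityIdeal F (Matrix P P F) V * identityIdeal F (Matrix Q Q F) W ≤
      identityIdeal F (Matrix (P ⊕ Q) (P ⊕ Q) F) (twoBlockTriangular V W) := by
  refine Submodule.mul_le.2 fun f hf g hg c hc => ?_
  have hc_blocks : c = fun l =>
      Matrix.fromBlocks (c l).toBlocks₁₁ (c l).toBlocks₁₂ 0 (c l).toBlocks₂₂ := by
    funext l
    rw [← (hc l).2.1, Matrix.fromBlocks_toBlocks]
  obtain ⟨D, hD⟩ := exists_lift_fromBlocks_zero₂₁ (fun l => (c l).toBlocks₁₁)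
    (fun l => (c l).toBlocks₁₂) (fun l => (c l).toBlocks₂₂) f
  obtain ⟨D', hD'⟩ := exists_lift_fromBlocks_zero₂₁ (fun l => (c l).toBlocks₁₁)
    (fun l => (c l).toBlocks₁₂) (fun l => (c l).toBlocks₂₂) g
  rw [← hc_blocks, hf _ fun l => (hc l).1] at hD
  rw [← hc_blocks, hg _ fun l => (hc l).2.2] at hD'
  simp [hD, hD', Matrix.fromBlocks_multiply]

theorem lift_eq_zero_and_sandwich_freeDiffQuot_eq_zero {f : FreeAlgebra F ℕ}
    (hf : f ∈ identityIdeal F (Matrix (P ⊕ Q) (P ⊕ Q) F) (twoBlockTriangular V W))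
    {a : ℕ → Matrix P P F} (ha : ∀ l, a l ∈ V) {b : ℕ → Matrix Q Q F} (hb : ∀ l, b l ∈ W)
    (k : ℕ) (E : Matrix P Q F) :
    FreeAlgebra.lift F a f = 0 ∧
      sandwich (FreeAlgebra.lift F a) (FreeAlgebra.lift F b) E (freeDiffQuot F k f) = 0 ∧
      FreeAlgebra.lift F b f = 0 := by
  have h := hf (fun l => Matrix.fromBlocks (a l) (if l = k then E else 0) 0 (b l))
    fun l => by simp [twoBlockTriangular, ha, hb]
  rw [lift_fromBlocks_single, ← Matrix.fromBlocks_zero, Matrix.fromBlocks_inj] at h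
  exact ⟨h.1, h.2.1, h.2.2.2⟩

theorem identityIdeal_twoBlockTriangular (hV : V.Nonempty) (hW : W.Nonempty) :
    identityIdeal F (Matrix (P ⊕ Q) (P ⊕ Q) F) (twoBlockTriangular V W) =
      identityIdeal F (Matrix P P F) V * identityIdeal F (Matrix Q Q F) W := by
  refine le_antisymm (fun f hf => ?_) identityIdeal_mul_identityIdeal_le_twoBlockTriangular
  obtain ⟨a₀, ha₀⟩ := hV
  obtain ⟨b₀, hb₀⟩ := hW
  refine mem_mul_of_map_mkQ_freeDiffQuot_eq_zero (identityIdeal_mul_top V).le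
    (top_mul_identityIdeal_le W) (fun a ha => ?_) (fun b hb => ?_) fun k => ?_
  · exact (lift_eq_zero_and_sandwich_freeDiffQuot_eq_zero hf ha (fun _ => hb₀) 0 0).1
  · exact (lift_eq_zero_and_sandwich_freeDiffQuot_eq_zero hf (fun _ => ha₀) hb 0 0).2.2
  · refine map_mkQ_mkQ_eq_zero_of_iInf_ker_le (iInf_ker_entry_comp_lift_le_identityIdeal V)
      (iInf_ker_entry_comp_lift_le_identityIdeal W) ?_
    rintro ⟨a, p, s⟩ ⟨b, r, q⟩
    have h := (lift_eq_zero_and_sandwich_freeDiffQuot_eq_zero hf (fun l => (a l).2)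
      (fun l => (b l).2) k (Matrix.single s r 1)).2.1
    have h := congr($h p q)
    rw [sandwich_single_apply] at h
    exact (TensorProduct.lid F F).injective (h.trans (map_zero _).symm)

end TwoBlocks

section ManyBlocks

/-- The block upper triangular matrices, with blocks indexed by `Fin m`, whose `j`-th diagonal
block lies in `V j`. -/
def blockTriangularSet {m : ℕ} {ι : Fin m → Type} (V : ∀ j, Set (Matrix (ι j) (ι j) F)) :
    Set (Matrix (Σ j, ι j) (Σ j, ι j) F) :=
  {x | x.BlockTriangular Sigma.fst ∧ ∀ j, x.blockDiag' j ∈ V j}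

theorem blockTriangularSet_nonempty {m : ℕ} {ι : Fin m → Type}
    {V : ∀ j, Set (Matrix (ι j) (ι j) F)} (hV : ∀ j, (V j).Nonempty) :
    (blockTriangularSet V).Nonempty := by
  choose v hv using hV
  refine ⟨Matrix.blockDiagonal' v, Matrix.blockTriangular_blockDiagonal' v, fun j => ?_⟩
  rw [Matrix.blockDiag'_blockDiagonal']
  exact hv j

/-- Splitting the indices of the first block off those of the remaining ones. -/
def sigmaFinSuccEquiv {m : ℕ} (ι : Fin (m + 1) → Type*) :
    (Σ j, ι j) ≃ ι 0 ⊕ Σ j : Fin m, ι j.succ where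
  toFun x := Fin.cases (motive := fun j => ι j → ι 0 ⊕ Σ j : Fin m, ι j.succ)
    Sum.inl (fun j x => Sum.inr ⟨j, x⟩) x.1 x.2
  invFun := Sum.elim (Sigma.mk 0) (Sigma.map Fin.succ fun _ x => x)
  left_inv := by rintro ⟨j, x⟩; cases j using Fin.cases <;> rfl
  right_inv := by rintro (x | ⟨j, x⟩) <;> rfl

variable {m : ℕ} {ι : Fin (m + 1) → Type} [∀ j, Fintype (ι j)] [∀ j, DecidableEq (ι j)]
  {V : ∀ j, Set (Matrix (ι j) (ι j) F)}

theorem preimage_reindexAlgEquiv_twoBlockTriangular :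
    Matrix.reindexAlgEquiv F F (sigmaFinSuccEquiv ι) ⁻¹'
      twoBlockTriangular (V 0) (blockTriangularSet fun j : Fin m => V j.succ) =
      blockTriangularSet V := by
  ext x
  rw [Set.mem_preimage, Matrix.coe_reindexAlgEquiv, Matrix.reindex_apply]
  constructor
  · rintro ⟨h₀, h₂₁, hx, hV⟩
    refine ⟨?_, Fin.cases h₀ hV⟩
    rintro ⟨p, p'⟩ ⟨q, q'⟩ hqp
    cases p using Fin.cases with
    | zero => exact absurd hqp (Fin.not_lt_zero _)
    | succ p =>
      cases q using Fin.cases with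
      | zero => exact congr($h₂₁ ⟨p, p'⟩ q')
      | succ q => exact @hx ⟨p, p'⟩ ⟨q, q'⟩ (Fin.succ_lt_succ_iff.1 hqp)
  · rintro ⟨hx, hV⟩
    refine ⟨hV 0, ?_, fun p q hqp => hx (Fin.succ_lt_succ_iff.2 hqp), fun j => hV j.succ⟩
    ext p q
    exact hx (Fin.succ_pos p.1)

theorem identityIdeal_blockTriangularSet_succ (hV : ∀ j, (V j).Nonempty) :
    identityIdeal F (Matrix (Σ j, ι j) (Σ j, ι j) F) (blockTriangularSet V) =
      identityIdeal F (Matrix (ι 0) (ι 0) F) (V 0) *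
        identityIdeal F (Matrix (Σ j : Fin m, ι j.succ) (Σ j : Fin m, ι j.succ) F)
          (blockTriangularSet fun j => V j.succ) := by
  rw [← preimage_reindexAlgEquiv_twoBlockTriangular, identityIdeal_preimage_algEquiv,
    identityIdeal_twoBlockTriangular (hV 0) (blockTriangularSet_nonempty fun j => hV j.succ)]

end ManyBlocks

end IdentityIdeal

theorem giambruno_zaicev_general {F : Type} [Field F] {m : ℕ} {ι : Fin (m + 1) → Type}
    [∀ j, Fintype (ι j)] [∀ j, DecidableEq (ι j)] {V : ∀ j, Set (Matrix (ι j) (ι j) F)}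
    (hV : ∀ j, (V j).Nonempty) :
    identityIdeal F (Matrix (Σ j, ι j) (Σ j, ι j) F) (blockTriangularSet V) =
      (List.ofFn fun j => identityIdeal F (Matrix (ι j) (ι j) F) (V j)).prod := by
  induction m with
  | zero =>
    rw [identityIdeal_blockTriangularSet_succ hV,
      identityIdeal_eq_top_of_subsingleton (S := Matrix (Σ j : Fin 0, ι j.succ) _ F),
      identityIdeal_mul_top]
    simp
  | succ m ih =>
    rw [identityIdeal_blockTriangularSet_succ hV, ih fun j => hV j.succ,
      List.ofFn_succ (n := m + 1), List.prod_cons]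

/-- **Giambruno–Zaicev.** Over a field `F` of characteristic `0`, the T-ideal of identities
of the algebra `UT(i₁, …, i_m)` of block upper triangular matrices with diagonal blocks of
sizes `i₁, …, i_m` (indexed here by the sigma type `Σ j, Fin (i j)`, `q` being in a later
block than `p` meaning `q.1 > p.1`) is the product `Γ_{i₁} Γ_{i₂} ⋯ Γ_{i_m}` of the
T-ideals of identities of the matrix algebras `M_{i₁}(F), …, M_{i_m}(F)`. -/
theorem giambruno_zaicev (F : Type) [Field F] [CharZero F]
    (m : ℕ) (hm : 1 ≤ m) (i : Fin m → ℕ) (hi : ∀ j, 1 ≤ i j) :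
    identityIdeal F (Matrix ((j : Fin m) × Fin (i j)) ((j : Fin m) × Fin (i j)) F)
        {x | ∀ p q : (j : Fin m) × Fin (i j), q.1 < p.1 → x p q = 0} =
      (List.ofFn fun j : Fin m =>
        identityIdeal F (Matrix (Fin (i j)) (Fin (i j)) F) Set.univ).prod := by
  obtain ⟨n, rfl⟩ := Nat.exists_eq_add_of_le' hm
  simpa [blockTriangularSet, Matrix.BlockTriangular] using
    giambruno_zaicev_general (F := F) (ι := fun j => Fin (i j)) fun _ => Set.univ_nonempty
end

section
/- Let F be a field and let R be a finitely generated F-algebra satisfying a nonzero polynomial identity. Then for an element a ∈ R the following are equivalent: (1) a acts as zero in every finite-dimensional irreducible representation of R, i.e. for every finite-dimensional F-vector space V and every F-algebra homomorphism ρ : R → End_F(V) making V a simple R-module, ρ(a) = 0; (2) a belongs to the nil radical of R, i.e. the two-sided ideal of R generated by a is a nil ideal. (Nullstellensatz for finitely generated PI algebras.) -/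
/-!
A polynomial identity of an algebra over a field can be polarized to a multilinear one, which
survives extension of scalars and passage to `R[X]`. If a primitive algebra `A` with faithful
simple module `V` satisfies a multilinear identity, then Jacobson density makes `V`
finite-dimensional over `End_A V`. Applied to `K ⊗ A`, where `K` is a maximal subfield of
`End_A V`, this makes `V` finite-dimensional over the commutative field `K` (Kaplansky).

If `b` is not nilpotent, then `1 - bX` is not left invertible in `R[X]`, so it lies in a maximal
left ideal, and `b` acts without being nilpotent on the quotient (Amitsur). By Kaplansky's theorem
this gives a homomorphism from `R` to matrices over a field under which the image of `b` is not
nilpotent. The entries of the images of the generators of `R` generate a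
commutative algebra, whose Jacobson property allows them to be specialized to a field finite over
the base. The image of `R` is then finite-dimensional, hence Artinian, and its radical is nilpotent.
So an element of the ideal of `a` whose image is not nilpotent would contradict that `a` annihilates
every finite-dimensional simple module. Conversely, an element generating a nil ideal lies in the
Jacobson radical, which annihilates every simple module.
-/

open Polynomial TensorProduct

section Multilinearization

theorem sum_surjective_eq_sum_alternating_map_sum_compl {R M N ι κ : Type*} [Semiring R]
    [AddCommMonoid M] [Module R M] [AddCommGroup N] [Module R N] [Fintype ι] [DecidableEq ι]
    [Fintype κ] [DecidableEq κ] (f : MultilinearMap R (fun _ : ι => M) N) (g : ι → κ → M) :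
    ∑ τ : ι → κ with τ.Surjective, f (fun i => g i (τ i)) =
      ∑ T : Finset κ, (-1 : ℤ) ^ T.card • f fun i => ∑ j ∈ Tᶜ, g i j := by
  have hie := Finset.inclusion_exclusion_sum_inf_compl Finset.univ
    (fun j => {τ : ι → κ | ∀ i, τ i ≠ j}) (fun τ => f fun i => g i (τ i))
  have hsurj : Finset.univ.inf (fun j => ({τ : ι → κ | ∀ i, τ i ≠ j} : Finset (ι → κ))ᶜ) =
      ({τ | τ.Surjective} : Finset (ι → κ)) := by
    ext τ
    simp only [Finset.mem_inf, Finset.mem_univ, Finset.mem_compl, Finset.mem_filter, true_and,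
      forall_const, not_forall, not_not]
    rfl
  have havoid (T : Finset κ) : T.inf (fun j => ({τ : ι → κ | ∀ i, τ i ≠ j} : Finset (ι → κ))) =
      Fintype.piFinset fun _ => Tᶜ := by
    ext τ
    simp only [Finset.mem_inf, Finset.mem_filter, Finset.mem_univ, true_and, Fintype.mem_piFinset,
      Finset.mem_compl]
    grind
  simpa only [hsurj, havoid, ← f.map_sum_finset, Finset.powerset_univ] using hie

theorem sum_surjective_eq_sum_perm {κ N : Type*} [Fintype κ] [DecidableEq κ] [AddCommMonoid N]
    (f : (κ → κ) → N) :
    ∑ τ : κ → κ with τ.Surjective, f τ = ∑ σ : Equiv.Perm κ, f σ := by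
  symm
  refine Finset.sum_bij (fun σ _ => σ) (fun σ _ => ?_) (fun _ _ _ _ h => Equiv.coe_fn_injective h)
    (fun τ hτ => ?_) fun _ _ => rfl
  · simpa using σ.surjective
  · have hτ : τ.Surjective := by simpa using hτ
    exact ⟨.ofBijective τ hτ.bijective_of_finite, Finset.mem_univ _, rfl⟩

theorem sum_alternating_prod_map_eq_sum_perm {A X : Type*} [Ring A] [DecidableEq X] {d : ℕ}
    (u : Fin d → X) (r : Fin d → A) {w : List X} (hw : w.length ≤ d) :
    ∑ T : Finset (Fin d), (-1 : ℤ) ^ T.card •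
        (w.map fun x => ∑ j ∈ Tᶜ, if u j = x then r j else 0).prod =
      ∑ σ : Equiv.Perm (Fin d),
        if List.ofFn (u ∘ σ) = w then (List.ofFn (r ∘ σ)).prod else 0 := by
  obtain ⟨l, s, rfl⟩ : ∃ (l : ℕ) (s : Fin l → X), w = List.ofFn s := ⟨_, _, (List.ofFn_get w).symm⟩
  rw [List.length_ofFn] at hw
  have hprod (τ : Fin l → Fin d) :
      (List.ofFn fun p => if u (τ p) = s p then r (τ p) else 0).prod =
        if u ∘ τ = s then (List.ofFn (r ∘ τ)).prod else 0 := by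
    split_ifs with h
    · simp [← h, Function.comp_def]
    · obtain ⟨p, hp⟩ := Function.ne_iff.1 h
      exact List.prod_eq_zero (List.mem_ofFn.2 ⟨p, if_neg hp⟩)
  have hpol := sum_surjective_eq_sum_alternating_map_sum_compl (MultilinearMap.mkPiAlgebraFin ℤ l A)
    fun p j => if u j = s p then r j else 0
  simp only [MultilinearMap.mkPiAlgebraFin_apply, hprod] at hpol
  simp only [List.map_ofFn, Function.comp_def] at hpol ⊢
  rw [← hpol]
  rcases hw.lt_or_eq with hlt | rfl
  · rw [Finset.filter_false_of_mem, Finset.sum_empty, Finset.sum_eq_zero]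
    · exact fun σ _ => if_neg fun h => hlt.ne' (by simpa using congrArg List.length h)
    · exact fun τ _ hτ => hlt.not_ge (by simpa using Fintype.card_le_of_surjective τ hτ)
  · simp only [sum_surjective_eq_sum_perm, List.ofFn_inj]

/-- The multilinear polynomial `∑ σ, c σ • x (σ 0) * ⋯ * x (σ (d - 1))`, as a multilinear map on
an algebra. -/
noncomputable def permForm {F : Type*} (A : Type*) [CommRing F] [Ring A] [Algebra F A] {d : ℕ}
    (c : Equiv.Perm (Fin d) → F) : MultilinearMap F (fun _ : Fin d => A) A :=
  ∑ σ, c σ • (MultilinearMap.mkPiAlgebraFin F d A).domDomCongr σ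

theorem permForm_apply {F A : Type*} [CommRing F] [Ring A] [Algebra F A] {d : ℕ}
    (c : Equiv.Perm (Fin d) → F) (r : Fin d → A) :
    permForm A c r = ∑ σ, c σ • (List.ofFn (r ∘ σ)).prod := by
  simp [permForm, Function.comp_def]

/-- The algebra satisfies a multilinear polynomial identity, normalized so that the monomial with
the variables in their standard order has coefficient `1`. -/
def HasMultilinearIdentity (F A : Type*) [CommRing F] [Ring A] [Algebra F A] : Prop :=
  ∃ (d : ℕ) (c : Equiv.Perm (Fin d) → F), c 1 = 1 ∧ permForm A c = 0

theorem freeAlgebra_lift_eq_sum {F A X : Type*} [CommRing F] [Ring A] [Algebra F A]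
    (f : FreeAlgebra F X) (x : X → A) :
    FreeAlgebra.lift F x f = ((FreeAlgebra.basisFreeMonoid F X).repr f).sum
      fun w c => c • (w.toList.map x).prod := by
  have hmonomial (w : FreeMonoid X) :
      FreeAlgebra.lift F x (FreeAlgebra.basisFreeMonoid F X w) = (w.toList.map x).prod := by
    have : FreeAlgebra.basisFreeMonoid F X w = FreeMonoid.lift (FreeAlgebra.ι F) w := by
      simp [FreeAlgebra.basisFreeMonoid, FreeAlgebra.equivMonoidAlgebraFreeMonoid]
    rw [this, FreeMonoid.lift_apply, map_list_prod, List.map_map]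
    simp [Function.comp_def]
  conv_lhs => rw [← (FreeAlgebra.basisFreeMonoid F X).linearCombination_repr f]
  simp only [Finsupp.linearCombination_apply, Finsupp.sum, map_sum, map_smul, hmonomial]

/- Polarization of `f` at a monomial `w₀` of maximal degree: the alternating sum removes every
term which does not use each of the new variables, so only monomials of full degree survive. -/
theorem HasMultilinearIdentity.of_freeAlgebra {F A X : Type*} [Field F] [Ring A] [Algebra F A]
    {f : FreeAlgebra F X} (hf : f ≠ 0) (hfA : ∀ x : X → A, FreeAlgebra.lift F x f = 0) :
    HasMultilinearIdentity F A := by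
  classical
  set p := (FreeAlgebra.basisFreeMonoid F X).repr f
  have hp : p.support.Nonempty := by simpa [p, Finsupp.support_nonempty_iff] using hf
  obtain ⟨w₀, hw₀, hmax⟩ := p.support.exists_max_image (fun w => w.toList.length) hp
  set d := w₀.toList.length
  set u : Fin d → X := w₀.toList.get
  have hpol (r : Fin d → A) :
      ∑ σ : Equiv.Perm (Fin d), p (.ofList (List.ofFn (u ∘ σ))) • (List.ofFn (r ∘ σ)).prod = 0 :=
    calc
      _ = ∑ w ∈ p.support, p w • ∑ σ : Equiv.Perm (Fin d),
            if List.ofFn (u ∘ σ) = w.toList then (List.ofFn (r ∘ σ)).prod else 0 := by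
        simp only [Finset.smul_sum]
        rw [Finset.sum_comm]
        refine Finset.sum_congr rfl fun σ _ => ?_
        have hword (w : FreeMonoid X) :
            List.ofFn (u ∘ σ) = w.toList ↔ FreeMonoid.ofList (List.ofFn (u ∘ σ)) = w := Iff.rfl
        simp only [hword, smul_ite, smul_zero, Finset.sum_ite_eq]
        split_ifs with h
        · rfl
        · rw [Finsupp.notMem_support_iff.1 h, zero_smul]
      _ = ∑ T : Finset (Fin d), (-1 : ℤ) ^ T.card •
            FreeAlgebra.lift F (fun x => ∑ j ∈ Tᶜ, if u j = x then r j else 0) f := by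
        simp only [freeAlgebra_lift_eq_sum, Finsupp.sum, Finset.smul_sum]
        conv_rhs => rw [Finset.sum_comm]
        refine Finset.sum_congr rfl fun w hw => ?_
        rw [← Finset.smul_sum, ← sum_alternating_prod_map_eq_sum_perm u r (hmax w hw),
          Finset.smul_sum]
        exact Finset.sum_congr rfl fun T _ => smul_comm _ _ _
      _ = 0 := by simp only [hfA, smul_zero, Finset.sum_const_zero]
  have hlead : List.ofFn (u ∘ (1 : Equiv.Perm (Fin d))) = w₀.toList := List.ofFn_get _
  refine ⟨d, fun σ => (p w₀)⁻¹ * p (.ofList (List.ofFn (u ∘ σ))), ?_, ?_⟩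
  · dsimp only
    rw [hlead]
    exact inv_mul_cancel₀ (Finsupp.mem_support_iff.1 hw₀)
  · ext r
    simp [permForm_apply, mul_smul, ← Finset.smul_sum, hpol]

end Multilinearization

section Extension

theorem multilinearMap_eq_zero_of_mem_span {R ι N : Type*} {M : ι → Type*} [Semiring R] [Finite ι]
    [∀ i, AddCommMonoid (M i)] [∀ i, Module R (M i)] [AddCommMonoid N] [Module R N]
    (f : MultilinearMap R M N) {s : ∀ i, Set (M i)} (hs : ∀ x, (∀ i, x i ∈ s i) → f x = 0)
    {x : ∀ i, M i} (hx : ∀ i, x i ∈ Submodule.span R (s i)) : f x = 0 := by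
  classical
  cases nonempty_fintype ι
  suffices H : ∀ (t : Finset ι) (x : ∀ i, M i), (∀ i ∈ t, x i ∈ Submodule.span R (s i)) →
      (∀ i ∉ t, x i ∈ s i) → f x = 0 from
    H Finset.univ x (fun i _ => hx i) fun i hi => absurd (Finset.mem_univ i) hi
  intro t
  induction t using Finset.induction_on with
  | empty => exact fun x _ h => hs x fun i => h i (Finset.notMem_empty i)
  | insert i t hi ih =>
    intro x hspan hmem
    have hker : Submodule.span R (s i) ≤ (f.toLinearMap x i).ker := by
      refine Submodule.span_le.2 fun y hy => ih _ (fun j hj => ?_) fun j hj => ?_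
      · rw [Function.update_of_ne (ne_of_mem_of_not_mem hj hi)]
        exact hspan j (Finset.mem_insert_of_mem hj)
      · obtain rfl | hji := eq_or_ne j i
        · simpa using hy
        · rw [Function.update_of_ne hji]
          exact hmem j (by simp [hji, hj])
    simpa using hker (hspan i (Finset.mem_insert_self i t))

theorem HasMultilinearIdentity.of_span_range_eq_top {F Z A S : Type*} [CommRing F] [CommRing Z]
    [Ring A] [Ring S] [Algebra F Z] [Algebra F A] [Algebra F S] [Algebra Z S] [IsScalarTower F Z S]
    (h : HasMultilinearIdentity F A) (φ : A →ₐ[F] S)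
    (hφ : Submodule.span Z (Set.range φ) = ⊤) : HasMultilinearIdentity F S := by
  obtain ⟨d, c, hc, hzero⟩ := h
  refine ⟨d, c, hc, MultilinearMap.ext fun x => ?_⟩
  have hZ (y : Fin d → S) : permForm S c y = permForm S (algebraMap F Z ∘ c) y := by
    simp [permForm_apply]
  rw [hZ]
  refine multilinearMap_eq_zero_of_mem_span _ (s := fun _ => Set.range φ) (fun y hy => ?_)
    fun i => hφ ▸ Submodule.mem_top
  choose r hr using hy
  obtain rfl : φ ∘ r = y := funext hr
  have hmap : permForm S c (φ ∘ r) = φ (permForm A c r) := by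
    simp [permForm_apply, map_list_prod, List.map_ofFn, Function.comp_assoc]
  rw [← hZ, hmap, hzero, zero_apply, map_zero]

theorem HasMultilinearIdentity.polynomial {F A : Type*} [CommRing F] [Ring A] [Algebra F A]
    (h : HasMultilinearIdentity F A) : HasMultilinearIdentity F A[X] := by
  let _ : Algebra F[X] A[X] := Polynomial.algebra F A
  refine h.of_span_range_eq_top (Z := F[X]) CAlgHom (eq_top_iff.2 fun p _ => ?_)
  induction p using Polynomial.induction_on' with
  | add p q hp hq => exact add_mem (hp trivial) (hq trivial)
  | monomial n a =>
    have : monomial n a = (X ^ n : F[X]) • (C a : A[X]) := by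
      simp [Algebra.smul_def, X_pow_mul_C, C_mul_X_pow_eq_monomial]
    rw [this]
    exact Submodule.smul_mem _ _ (Submodule.subset_span ⟨a, rfl⟩)

theorem HasMultilinearIdentity.tensorProduct {F A : Type*} [CommRing F] [Ring A] [Algebra F A]
    (h : HasMultilinearIdentity F A) (K : Type*) [CommRing K] [Algebra F K] :
    HasMultilinearIdentity F (K ⊗[F] A) := by
  refine h.of_span_range_eq_top (Z := K) Algebra.TensorProduct.includeRight
    (eq_top_iff.2 fun x _ => ?_)
  induction x with
  | zero => exact zero_mem _
  | add x y hx hy => exact add_mem (hx trivial) (hy trivial)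
  | tmul k a =>
    rw [← mul_one k, ← smul_eq_mul, ← TensorProduct.smul_tmul']
    exact Submodule.smul_mem _ _ (Submodule.subset_span ⟨a, rfl⟩)

end Extension

section Kaplansky

theorem list_prod_map_smul_eq_ite_range {S V : Type*} [Monoid S] [AddMonoid V]
    [DistribMulAction S V] {d : ℕ} {y : ℕ → S} {e : ℕ → V}
    (h : ∀ j, ∀ k < d, y j • e (k + 1) = if k = j then e j else 0) {l : List ℕ}
    (hl : l.length ≤ d) :
    (l.map y).prod • e l.length = if l = List.range l.length then e 0 else 0 := by
  induction l using List.reverseRecOn with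
  | nil => simp
  | append_singleton l j ih =>
    have hld : l.length < d := by simpa using hl
    simp only [List.map_append, List.prod_append, List.map_singleton, List.prod_singleton,
      mul_smul, List.length_append, List.length_singleton, h j _ hld, List.range_succ,
      List.append_singleton_inj]
    obtain rfl | hj := eq_or_ne l.length j
    · simpa using ih hld.le
    · simp [hj, hj.symm]

theorem HasMultilinearIdentity.exists_forall_eq_zero_of_smul_eq_ite {F S V : Type*} [CommRing F]
    [Ring S] [Algebra F S] [AddCommGroup V] [Module S V] (h : HasMultilinearIdentity F S) :
    ∃ d : ℕ, ∀ (y : ℕ → S) (e : ℕ → V),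
      (∀ j, ∀ k < d, y j • e (k + 1) = if k = j then e j else 0) → e 0 = 0 := by
  obtain ⟨d, c, hc, hzero⟩ := h
  refine ⟨d, fun y e hye => ?_⟩
  have hterm (σ : Equiv.Perm (Fin d)) :
      (List.ofFn ((fun p : Fin d => y p) ∘ σ)).prod • e d = if σ = 1 then e 0 else 0 := by
    have hσ : List.ofFn (fun p => (σ p : ℕ)) = List.range d ↔ σ = 1 := by
      have hrange : List.range d = List.ofFn fun p : Fin d => (p : ℕ) :=
        List.ext_getElem (by simp) (by simp)
      simp only [hrange, List.ofFn_inj, Equiv.ext_iff, Fin.ext_iff, funext_iff,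
        Equiv.Perm.one_apply]
    have := list_prod_map_smul_eq_ite_range hye (l := List.ofFn fun p => (σ p : ℕ)) (by simp)
    simpa only [List.map_ofFn, List.length_ofFn, hσ, Function.comp_def] using this
  calc
    e 0 = permForm S c (fun p => y p) • e d := by
      simp [permForm_apply, Finset.sum_smul, Algebra.smul_def, mul_smul, hterm, hc]
    _ = 0 := by rw [hzero, zero_apply, zero_smul]

open scoped Classical in
theorem HasMultilinearIdentity.finite_end_of_isSimpleModule {F S V : Type*} [CommRing F] [Ring S]
    [Algebra F S] [AddCommGroup V] [Module S V] [IsSimpleModule S V]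
    (h : HasMultilinearIdentity F S) : Module.Finite (Module.End S V) V := by
  obtain ⟨d, hd⟩ := h.exists_forall_eq_zero_of_smul_eq_ite (V := V)
  by_contra hfin
  let b := Module.Basis.ofVectorSpace (Module.End S V) V
  have : Infinite (Module.Basis.ofVectorSpaceIndex (Module.End S V) V) :=
    not_finite_iff_infinite.1 fun _ => hfin (.of_basis b)
  let e := Infinite.natEmbedding (Module.Basis.ofVectorSpaceIndex (Module.End S V) V)
  have hshift (j : ℕ) : ∃ y : S, ∀ k < d, y • b (e (k + 1)) = if k = j then b (e j) else 0 := by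
    let f := b.constr ℕ fun i => if i = e (j + 1) then b (e j) else 0
    obtain ⟨y, hy⟩ := jacobson_density f ((Finset.range (d + 1)).image fun k => b (e k))
    refine ⟨y, fun k hk => ?_⟩
    rw [← hy _ (Finset.mem_image_of_mem _ (by simpa using hk)), b.constr_basis]
    simp
  choose y hy using hshift
  exact b.ne_zero (e 0) (hd y (fun k => b (e k)) hy)

theorem exists_set_centralizer_eq_self (M : Type*) [Mul M] : ∃ T : Set M, T.centralizer = T := by
  obtain ⟨T, hT⟩ : ∃ T : Set M, Maximal (· ∈ {s : Set M | s ⊆ s.centralizer}) T := by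
    refine zorn_subset _ fun c hc hchain => ⟨⋃₀ c, ?_, fun _ => Set.subset_sUnion_of_mem⟩
    rintro x ⟨s, hs, hxs⟩ y ⟨t, ht, hyt⟩
    rcases hchain.total hs ht with hst | hts
    exacts [hc ht (hst hxs) y hyt, hc hs hxs y (hts hyt)]
  refine ⟨T, subset_antisymm (fun x hx => ?_) hT.1⟩
  refine hT.2 (y := insert x T) ?_ (Set.subset_insert x T) (Set.mem_insert x T)
  rintro y (rfl | hy) z (rfl | hz)
  exacts [rfl, hx z hz, (hx y hy).symm, hT.1 hy z hz]

theorem HasMultilinearIdentity.finite_of_forall_end_eq_smul {F K A V : Type*} [CommRing F]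
    [CommRing K] [Ring A] [Algebra F K] [Algebra F A] [AddCommGroup V] [Module F V] [Module K V]
    [Module A V] [IsScalarTower F K V] [IsScalarTower F A V] [SMulCommClass K A V]
    [IsSimpleModule A V] (h : HasMultilinearIdentity F A)
    (hK : ∀ g : Module.End A V, (∀ (k : K) v, g (k • v) = k • g v) → ∃ k : K, ∀ v, g v = k • v) :
    Module.Finite K V := by
  let _ : Module (K ⊗[F] A) V := TensorProduct.Algebra.module
  have htmul (k : K) (a : A) (v : V) : (k ⊗ₜ[F] a) • v = k • a • v :=
    TensorProduct.Algebra.smul_def k a v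
  have hleft (k : K) (v : V) : (k ⊗ₜ[F] (1 : A)) • v = k • v := by rw [htmul, one_smul]
  have hright (a : A) (v : V) : ((1 : K) ⊗ₜ[F] a) • v = a • v := by rw [htmul, one_smul]
  have : IsSimpleModule (K ⊗[F] A) V := by
    refine isSimpleModule_iff_toSpanSingleton_surjective.2
      ⟨IsSimpleModule.nontrivial A V, fun v hv w => ?_⟩
    obtain ⟨a, rfl⟩ := IsSimpleModule.toSpanSingleton_surjective A hv w
    exact ⟨1 ⊗ₜ a, hright a v⟩
  have hscalar (g : Module.End (K ⊗[F] A) V) : ∃ k : K, ∀ v, g v = k • v :=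
    hK { toFun := g, map_add' := g.map_add, map_smul' := fun a v => by simp [← hright] }
      fun k v => by simp [← hleft]
  obtain ⟨s, hs⟩ := ((h.tensorProduct K).finite_end_of_isSimpleModule (V := V)).fg_top
  let W : Submodule (Module.End (K ⊗[F] A) V) V :=
    { Submodule.span K (s : Set V) with
      smul_mem' := fun g v hv => by
        obtain ⟨k, hk⟩ := hscalar g
        simpa [hk] using Submodule.smul_mem _ k hv }
  have hW : W = ⊤ := top_le_iff.1 (hs ▸ Submodule.span_le.2 Submodule.subset_span)
  exact ⟨s, eq_top_iff.2 fun v _ => hW.ge (Submodule.mem_top (x := v))⟩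

theorem isField_centralizer_of_centralizer_eq_self {F D : Type*} [CommRing F] [DivisionRing D]
    [Algebra F D] {T : Set D} (hT : T.centralizer = T) : IsField (Subalgebra.centralizer F T) where
  exists_pair_ne := exists_pair_ne _
  mul_comm x y := Subtype.ext (y.2 x.1 (hT.subset x.2))
  mul_inv_cancel {x} hx := by
    refine ⟨⟨x.1⁻¹, fun y hy => ?_⟩, Subtype.ext (mul_inv_cancel₀ fun h => hx (Subtype.ext h))⟩
    exact (Commute.inv_right₀ (x.2 y hy) :)

open scoped Classical in
theorem HasMultilinearIdentity.exists_field_finite_of_isSimpleModule.{w} {F A : Type*} {V : Type w}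
    [CommRing F] [Ring A] [Algebra F A] [AddCommGroup V] [Module F V] [Module A V]
    [IsScalarTower F A V] [IsSimpleModule A V] (h : HasMultilinearIdentity F A) :
    ∃ (K : Type w) (_ : Field K) (_ : Algebra F K) (_ : Module K V) (_ : IsScalarTower F K V)
      (_ : SMulCommClass A K V), Module.Finite K V := by
  obtain ⟨T, hT⟩ := exists_set_centralizer_eq_self (Module.End A V)
  let _ : Field (Subalgebra.centralizer F T) :=
    (isField_centralizer_of_centralizer_eq_self hT).toField
  refine ⟨Subalgebra.centralizer F T, inferInstance, inferInstance, inferInstance, inferInstance,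
    inferInstance, h.finite_of_forall_end_eq_smul fun g hg => ⟨⟨g, fun y hy => ?_⟩, fun _ => rfl⟩⟩
  exact LinearMap.ext fun v => (hg ⟨y, hT.superset hy⟩ v).symm

end Kaplansky

section Amitsur

theorem isNilpotent_of_mul_one_sub_C_mul_X_eq_one {R : Type*} [Ring R] {b : R} {p : R[X]}
    (hp : p * (1 - C b * X) = 1) : IsNilpotent b := by
  have hcoeff (k : ℕ) : p.coeff k = b ^ k := by
    rw [mul_sub, mul_one, ← mul_assoc] at hp
    induction k with
    | zero => simpa using congrArg (coeff · 0) hp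
    | succ k ih =>
      have hsucc := congrArg (coeff · (k + 1)) hp
      simp only [coeff_sub, coeff_mul_X, coeff_mul_C, ih, coeff_one, k.succ_ne_zero, if_false,
        sub_eq_zero] at hsucc
      rw [hsucc, pow_succ]
  exact ⟨p.natDegree + 1, by rw [← hcoeff, coeff_natDegree_succ_eq_zero]⟩

theorem isNilpotent_of_forall_isSimpleModule_polynomial.{u} {R : Type u} [Ring R] {b : R}
    (h : ∀ (V : Type u) [AddCommGroup V] [Module R[X] V] [IsSimpleModule R[X] V],
      ∃ n : ℕ, ∀ v : V, (C b : R[X]) ^ n • v = 0) : IsNilpotent b := by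
  by_contra hb
  have hproper : Ideal.span {1 - C b * X} ≠ (⊤ : Ideal R[X]) := fun htop =>
    have ⟨_, hp⟩ := Ideal.mem_span_singleton'.1 (htop ▸ Submodule.mem_top (x := (1 : R[X])))
    hb (isNilpotent_of_mul_one_sub_C_mul_X_eq_one hp)
  obtain ⟨M, hM, hle⟩ := Ideal.exists_le_maximal _ hproper
  have : IsSimpleModule R[X] (R[X] ⧸ M) := isSimpleModule_iff_isCoatom.2 hM.out
  obtain ⟨n, hn⟩ := h (R[X] ⧸ M)
  have hpow : (C b * X) ^ n ∈ M := by
    rw [(commute_X (C b)).symm.mul_pow]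
    exact (Submodule.Quotient.mk_eq_zero M).1 (hn (Submodule.Quotient.mk (X ^ n)))
  have hone_sub : 1 - (C b * X) ^ n ∈ M := by
    rw [← geom_sum_mul_neg]
    exact M.mul_mem_left _ (hle (Ideal.mem_span_singleton_self _))
  exact hM.ne_top ((Ideal.eq_top_iff_one M).2 (by simpa using M.add_mem hone_sub hpow))

end Amitsur

section Specialization

variable {n : Type*} [Fintype n] [DecidableEq n]

theorem matrix_pow_card_eq_zero_of_isNilpotent {S : Type*} [CommRing S] [IsReduced S]
    {A : Matrix n n S} (hA : IsNilpotent A) : A ^ Fintype.card n = 0 := by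
  have hcharpoly : A.charpoly = X ^ Fintype.card n :=
    sub_eq_zero.1 <| Polynomial.ext fun i => (Polynomial.isNilpotent_iff.1
      (Matrix.isNilpotent_charpoly_sub_pow_of_isNilpotent hA) i).eq_zero
  simpa [hcharpoly] using A.aeval_self_charpoly

theorem isNilpotent_of_forall_isMaximal_isNilpotent_map {S : Type*} [CommRing S] [IsReduced S]
    [IsJacobsonRing S] {A : Matrix n n S}
    (hA : ∀ m : Ideal S, m.IsMaximal → IsNilpotent (A.map (Ideal.Quotient.mk m))) :
    IsNilpotent A := by
  refine ⟨Fintype.card n, Matrix.ext fun i j => ?_⟩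
  have hjacobson : (⊥ : Ideal S).jacobson = ⊥ := by
    rw [← Ideal.radical_eq_jacobson, Ideal.radical_bot_of_isReduced]
  have hmem : (A ^ Fintype.card n) i j ∈ (⊥ : Ideal S).jacobson := by
    refine Ideal.mem_sInf.2 fun m hm => Ideal.Quotient.eq_zero_iff_mem.1 ?_
    have := hm.2
    have hzero := matrix_pow_card_eq_zero_of_isNilpotent (hA m hm.2)
    rw [← Matrix.map_pow] at hzero
    exact congrFun₂ hzero i j
  simpa [hjacobson] using hmem

theorem exists_fg_subalgebra_mapMatrix_comp_eq {F R S : Type*} [CommRing F] [Ring R] [CommRing S]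
    [Algebra F R] [Algebra F S] [Algebra.FiniteType F R] (φ : R →ₐ[F] Matrix n n S) :
    ∃ (S₀ : Subalgebra F S) (_ : S₀.FG) (φ₀ : R →ₐ[F] Matrix n n S₀),
      S₀.val.mapMatrix.comp φ₀ = φ := by
  obtain ⟨s, hs⟩ := Algebra.FiniteType.out (R := F) (A := R)
  let entries : Set S := ⋃ r ∈ s, Set.range fun p : n × n => φ r p.1 p.2
  have hfin : entries.Finite := s.finite_toSet.biUnion fun _ _ => Set.finite_range _
  let S₀ := Algebra.adjoin F entries
  let ι : Matrix n n S₀ →ₐ[F] Matrix n n S := S₀.val.mapMatrix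
  have hι : Function.Injective ι := Matrix.map_injective Subtype.val_injective
  have hrange : (⊤ : Subalgebra F R) ≤ ι.range.comap φ := by
    refine hs ▸ Algebra.adjoin_le fun r hr => ?_
    exact ⟨.of fun i j => ⟨φ r i j, Algebra.subset_adjoin (Set.mem_biUnion hr ⟨(i, j), rfl⟩)⟩, rfl⟩
  refine ⟨S₀, Subalgebra.fg_def.2 ⟨entries, hfin, rfl⟩,
    (AlgEquiv.ofInjective ι hι).symm.toAlgHom.comp (φ.codRestrict ι.range fun r => hrange trivial),
    AlgHom.ext fun r => ?_⟩
  exact congrArg Subtype.val ((AlgEquiv.ofInjective ι hι).apply_symm_apply ⟨φ r, hrange trivial⟩)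

theorem isNilpotent_of_forall_field_isNilpotent.{w} {F R : Type*} {S : Type w} [CommRing F]
    [IsJacobsonRing F] [Ring R] [CommRing S] [IsReduced S] [Algebra F R] [Algebra F S]
    [Algebra.FiniteType F R] {b : R}
    (hb : ∀ (L : Type w) [Field L] [Algebra F L] [Module.Finite F L] (ψ : R →ₐ[F] Matrix n n L),
      IsNilpotent (ψ b)) (φ : R →ₐ[F] Matrix n n S) : IsNilpotent (φ b) := by
  obtain ⟨S₀, hfg, φ₀, rfl⟩ := exists_fg_subalgebra_mapMatrix_comp_eq φ
  have : Algebra.FiniteType F S₀ := S₀.fg_iff_finiteType.1 hfg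
  have : IsJacobsonRing S₀ := isJacobsonRing_of_finiteType (A := F)
  have : IsReduced S₀ := isReduced_of_injective S₀.val Subtype.val_injective
  refine IsNilpotent.map (r := φ₀ b) ?_ S₀.val.mapMatrix
  refine isNilpotent_of_forall_isMaximal_isNilpotent_map fun m hm => ?_
  let _ : Field (S₀ ⧸ m) := Ideal.Quotient.field m
  have : Module.Finite F (S₀ ⧸ m) := finite_of_finite_type_of_isJacobsonRing F (S₀ ⧸ m)
  exact hb (S₀ ⧸ m) ((Ideal.Quotient.mkₐ F m).mapMatrix.comp φ₀)

end Specialization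

section Nullstellensatz

theorem isNilpotent_of_forall_algHom_matrix.{u} {F : Type*} {R : Type u} [CommRing F]
    [IsJacobsonRing F] [Ring R] [Algebra F R] [Algebra.FiniteType F R]
    (h : HasMultilinearIdentity F R) {b : R}
    (hb : ∀ (L : Type u) [Field L] [Algebra F L] [Module.Finite F L] (n : ℕ)
      (ψ : R →ₐ[F] Matrix (Fin n) (Fin n) L), IsNilpotent (ψ b)) : IsNilpotent b := by
  refine isNilpotent_of_forall_isSimpleModule_polynomial fun V _ _ _ => ?_
  let _ : Module F V := Module.compHom V (algebraMap F R[X])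
  have : IsScalarTower F R[X] V := .of_algebraMap_smul fun _ _ => rfl
  obtain ⟨K, _, _, _, _, _, _⟩ := h.polynomial.exists_field_finite_of_isSimpleModule (V := V)
  let φ : R →ₐ[F] Module.End K V := (Algebra.lsmul F K V).comp CAlgHom
  let toMatrix := (algEquivMatrix (Module.finBasis K V)).restrictScalars F
  obtain ⟨n, hn⟩ : IsNilpotent (φ b) := (IsNilpotent.map_iff toMatrix.injective).1 <|
    isNilpotent_of_forall_field_isNilpotent (fun L _ _ _ ψ => hb L _ ψ) (toMatrix.toAlgHom.comp φ)
  refine ⟨n, fun v => ?_⟩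
  simpa [φ, ← map_pow] using LinearMap.congr_fun hn v

theorem isSemisimpleModule_of_isIntegral_field {F L M : Type*} [CommRing F] [Field L] [Algebra F L]
    [Algebra.IsIntegral F L] [AddCommGroup M] [Module F M] [Module L M] [IsScalarTower F L M] :
    IsSemisimpleModule F M := by
  let m := (⊥ : Ideal L).comap (algebraMap F L)
  have : m.IsMaximal := Ideal.isMaximal_comap_of_isIntegral_of_isMaximal ⊥
  have hm : Module.IsTorsionBySet F M m := fun v c => by
    have hc : algebraMap F L c = 0 := c.2
    rw [← algebraMap_smul L, hc, zero_smul]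
  let _ : Field (F ⧸ m) := Ideal.Quotient.field m
  let _ := hm.module
  exact hm.isSemisimpleModule_iff.1 inferInstance

theorem map_mem_jacobson_of_forall_mem_annihilator.{w} {F R : Type*} {B : Type w} [CommRing F]
    [Ring R] [Ring B] [Algebra F R] [Algebra F B] [Module.Finite F B] {a : R}
    (ha : ∀ (V : Type w) [AddCommGroup V] [Module F V] [Module R V] [IsScalarTower F R V]
      [Module.Finite F V] [IsSimpleModule R V], a ∈ Module.annihilator R V)
    {f : R →ₐ[F] B} (hf : Function.Surjective f) : f a ∈ Ring.jacobson B := by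
  rw [Ring.jacobson_eq_sInf_isMaximal, Ideal.mem_sInf]
  intro M hM
  have hsimple : IsSimpleModule B (B ⧸ M) := isSimpleModule_iff_isCoatom.2 hM.out.out
  let _ : Module R (B ⧸ M) := Module.compHom _ f.toRingHom
  have : IsScalarTower F R (B ⧸ M) := .of_algebraMap_smul fun c v =>
    (congrArg (· • v) (f.commutes c)).trans (algebraMap_smul B c v)
  have : IsSimpleModule R (B ⧸ M) := by
    refine isSimpleModule_iff_toSpanSingleton_surjective.2 ⟨hsimple.nontrivial, fun v hv w => ?_⟩
    obtain ⟨y, rfl⟩ := IsSimpleModule.toSpanSingleton_surjective B hv w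
    obtain ⟨r, rfl⟩ := hf y
    exact ⟨r, rfl⟩
  have hone : f a • (Submodule.Quotient.mk 1 : B ⧸ M) = 0 :=
    Module.mem_annihilator.1 (ha (B ⧸ M)) _
  simpa [← Submodule.Quotient.mk_smul, Submodule.Quotient.mk_eq_zero] using hone

theorem isNilpotent_map_of_mem_span_of_forall_mem_annihilator.{w} {F R : Type*} {A : Type w}
    [CommRing F] [Ring R] [Ring A] [Algebra F R] [Algebra F A] [IsNoetherian F A] [IsArtinian F A]
    {a b : R}
    (ha : ∀ (V : Type w) [AddCommGroup V] [Module F V] [Module R V] [IsScalarTower F R V]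
      [Module.Finite F V] [IsSimpleModule R V], a ∈ Module.annihilator R V)
    (hb : b ∈ TwoSidedIdeal.span {a}) (ψ : R →ₐ[F] A) : IsNilpotent (ψ b) := by
  have : Module.Finite F ψ.range := inferInstanceAs (Module.Finite F ψ.range.toSubmodule)
  have : IsArtinian F ψ.range := inferInstanceAs (IsArtinian F ψ.range.toSubmodule)
  have : IsArtinianRing ψ.range := isArtinian_of_tower F inferInstance
  have hle : TwoSidedIdeal.span {a} ≤
      (Ring.jacobson ψ.range).toTwoSided.comap ψ.rangeRestrict := by
    rw [TwoSidedIdeal.span_le, Set.singleton_subset_iff, SetLike.mem_coe, TwoSidedIdeal.mem_comap,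
      Ideal.mem_toTwoSided]
    exact map_mem_jacobson_of_forall_mem_annihilator ha ψ.rangeRestrict_surjective
  have hmem : ψ.rangeRestrict b ∈ Ring.jacobson ψ.range :=
    Ideal.mem_toTwoSided.1 ((TwoSidedIdeal.mem_comap _).1 (hle hb))
  obtain ⟨k, hk⟩ := IsSemiprimaryRing.isNilpotent (R := ψ.range)
  have hpow : ψ.rangeRestrict b ^ k = 0 := by simpa [hk] using Ideal.pow_mem_pow hmem k
  exact ⟨k, congrArg Subtype.val hpow⟩

theorem mem_jacobson_of_forall_isNilpotent_mul {R : Type*} [Ring R] {a : R}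
    (ha : ∀ r, IsNilpotent (r * a)) : a ∈ Ring.jacobson R := by
  rw [← Ideal.jacobson_bot, Ideal.mem_jacobson_iff]
  intro r
  obtain ⟨z, hz⟩ := (ha r).isUnit_add_one.exists_left_inv
  refine ⟨z, Ideal.mem_bot.2 (sub_eq_zero.2 ?_)⟩
  rw [← hz, mul_add, mul_one, mul_assoc]

theorem isSimpleModule_iff_forall_submodule {F R V : Type*} [CommRing F] [Ring R] [Algebra F R]
    [AddCommGroup V] [Module F V] [Module R V] [IsScalarTower F R V] :
    IsSimpleModule R V ↔ Nontrivial V ∧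
      ∀ W : Submodule F V, (∀ r : R, ∀ v ∈ W, r • v ∈ W) → W = ⊥ ∨ W = ⊤ := by
  refine ⟨fun _ => ⟨IsSimpleModule.nontrivial R V, fun W hW => ?_⟩, fun ⟨_, h⟩ => ?_⟩
  · refine (eq_bot_or_eq_top ({ W with smul_mem' := hW } : Submodule R V)).imp ?_ ?_ <;>
      simp [Submodule.ext_iff]
  · refine (isSimpleModule_iff R V).2 { eq_bot_or_eq_top := fun W => ?_ }
    simpa using h (W.restrictScalars F) fun r _ => W.smul_mem r

theorem forall_algHom_end_apply_eq_zero_iff.{u} {F R : Type*} [CommRing F] [Ring R] [Algebra F R]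
    {a : R} :
    (∀ (V : Type u) [AddCommGroup V] [Module F V], Module.Finite F V →
      ∀ ρ : R →ₐ[F] Module.End F V, Nontrivial V →
        (∀ W : Submodule F V, (∀ r : R, ∀ v ∈ W, ρ r v ∈ W) → W = ⊥ ∨ W = ⊤) → ρ a = 0) ↔
      ∀ (V : Type u) [AddCommGroup V] [Module F V] [Module R V] [IsScalarTower F R V]
        [Module.Finite F V] [IsSimpleModule R V], a ∈ Module.annihilator R V := by
  refine ⟨fun h V _ _ _ _ _ hV => ?_, fun h V _ _ _ ρ hnontrivial hW => ?_⟩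
  · obtain ⟨hnontrivial, hW⟩ := isSimpleModule_iff_forall_submodule (F := F).1 hV
    exact Module.mem_annihilator.2
      (LinearMap.congr_fun (h V inferInstance (Algebra.lsmul F F V) hnontrivial hW))
  · let _ : Module R V := Module.compHom V ρ.toRingHom
    have : IsScalarTower F R V := .of_algebraMap_smul fun c v =>
      LinearMap.congr_fun (ρ.commutes c) v
    have := isSimpleModule_iff_forall_submodule (F := F) (R := R).2 ⟨hnontrivial, hW⟩
    exact LinearMap.ext (Module.mem_annihilator.1 (h V))

theorem pi_nullstellensatz_general.{u} {F : Type*} [CommRing F] [IsJacobsonRing F] {R : Type u}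
    [Ring R] [Algebra F R] [Algebra.FiniteType F R] (hR : HasMultilinearIdentity F R) (a : R) :
    (∀ (V : Type u) [AddCommGroup V] [Module F V], Module.Finite F V →
      ∀ ρ : R →ₐ[F] Module.End F V, Nontrivial V →
        (∀ W : Submodule F V, (∀ r : R, ∀ v ∈ W, ρ r v ∈ W) → W = ⊥ ∨ W = ⊤) →
        ρ a = 0) ↔
      (∀ x ∈ TwoSidedIdeal.span {a}, IsNilpotent x) := by
  rw [forall_algHom_end_apply_eq_zero_iff]
  constructor
  · intro ha b hb
    refine isNilpotent_of_forall_algHom_matrix hR fun L _ _ _ n ψ => ?_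
    have : IsSemisimpleModule F (Matrix (Fin n) (Fin n) L) :=
      isSemisimpleModule_of_isIntegral_field (L := L)
    have hfinite : Module.Finite F (Matrix (Fin n) (Fin n) L) := .trans L _
    have := (IsSemisimpleModule.finite_tfae.out 0 1).1 hfinite
    have := (IsSemisimpleModule.finite_tfae.out 0 2).1 hfinite
    exact isNilpotent_map_of_mem_span_of_forall_mem_annihilator ha hb ψ
  · intro hnil V _ _ _ _ _ _
    refine IsSemisimpleModule.jacobson_le_annihilator R V ?_
    exact mem_jacobson_of_forall_isNilpotent_mul fun r =>
      hnil _ (TwoSidedIdeal.mul_mem_left _ _ _ (TwoSidedIdeal.subset_span rfl))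

end Nullstellensatz

/-- **Nullstellensatz for finitely generated PI algebras.** Let `R` be a finitely generated
`F`-algebra satisfying a nonzero polynomial identity. For `a ∈ R` the following are
equivalent: (1) `a` acts as zero in every finite-dimensional irreducible representation of
`R` (an `F`-algebra map `ρ : R → End_F V` with `V ≠ 0` finite dimensional and no proper
nonzero `ρ(R)`-invariant subspace — note that `R`-submodules via `ρ` are exactly the
`ρ(R)`-invariant `F`-subspaces); (2) `a` belongs to the nil radical of `R`, i.e. the
two-sided ideal generated by `a` is nil. -/
theorem pi_nullstellensatz (F : Type) [Field F] (R : Type) [Ring R] [Algebra F R]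
    (hfg : Algebra.FiniteType F R)
    (hPI : ∃ f : FreeAlgebra F ℕ, f ≠ 0 ∧ ∀ a : ℕ → R, (FreeAlgebra.lift F a) f = 0)
    (a : R) :
    (∀ (V : Type) [AddCommGroup V] [Module F V], FiniteDimensional F V →
      ∀ ρ : R →ₐ[F] Module.End F V, Nontrivial V →
        (∀ W : Submodule F V, (∀ r : R, ∀ v ∈ W, ρ r v ∈ W) → W = ⊥ ∨ W = ⊤) →
        ρ a = 0) ↔
      (∀ x ∈ TwoSidedIdeal.span {a}, IsNilpotent x) := by
  obtain ⟨f, hf, hfR⟩ := hPI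
  exact pi_nullstellensatz_general (.of_freeAlgebra hf hfR) a
end
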